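/- Let N ≥ 1, p, q ≥ 0 with pq > 1, and set r₁* = (N/2)(pq−1)/(p+1), r₂* = (N/2)(pq−1)/(q+1). Let ℓ* ≥ 1 satisfy ℓ* · min{r₁*, r₂*} ≥ 1. Let 0 < T < ∞ and let (u,v) be the minimal solution of the system (S) on ℝ^N × (0,T), and assume limsup_{t→T} ( ‖u(t)‖_{L^∞(ℝ^N)} + ‖v(t)‖_{L^∞(ℝ^N)} ) = ∞. Set ρ(t) = (T−t)^{1/2}. Then for every r₁ ∈ (ℓ* r₁*, ∞] and r₂ ∈ (ℓ* r₂*, ∞] there exists a constant c₁ > 0 such that liminf_{t→T} { (T−t)^{(N/2)(1/r₁* − 1/r₁)} |||u(t)|||_{r₁,ρ(t)} + (T−t)^{(N/2)(1/r₂* − 1/r₂)} |||v(t)|||_{r₂,ρ(t)} } ≥ c₁, where 1/∞ is interpreted as 0. -/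

import Mathlib

open MeasureTheory ENNReal Filter

noncomputable section

/-- Euclidean space `ℝ^N`. -/
abbrev Euc (N : ℕ) := EuclideanSpace ℝ (Fin N)

/-- The heat semigroup applied to a (nonnegative) function `φ` on `ℝ^N`, with values in `[0,∞]`:
`[S(t)φ](x) = ∫ (4πt)^{-N/2} exp(-|x-y|²/(4t)) φ(y) dy`. -/
noncomputable def heatS (N : ℕ) (t : ℝ) (φ : Euc N → ℝ) (x : Euc N) : ℝ≥0∞ :=
  ∫⁻ y, ENNReal.ofReal
    ((4 * Real.pi * t) ^ (-(N : ℝ) / 2) * Real.exp (-‖x - y‖ ^ 2 / (4 * t)) * φ y)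

/-- The `L^∞` norm of `S(t)φ` on `ℝ^N`. -/
noncomputable def heatSup (N : ℕ) (t : ℝ) (φ : Euc N → ℝ) : ℝ≥0∞ :=
  essSup (heatS N t φ) volume

/-- The `L^{r,∞}(E)` quasinorm: for `1 < r < ∞` it is
`sup_{λ>0} λ |{x ∈ E : |f x| > λ}|^{1/r}`; for `r = 1` (resp. `r = ∞`)
it is the usual `L¹(E)` (resp. `L^∞(E)`) norm. -/
noncomputable def wnorm (N : ℕ) (r : ℝ≥0∞) (f : Euc N → ℝ) (E : Set (Euc N)) : ℝ≥0∞ :=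
  if r = 1 then ∫⁻ x in E, ENNReal.ofReal |f x|
  else if r = ⊤ then essSup (fun x => ENNReal.ofReal |f x|) (volume.restrict E)
  else ⨆ (l : ℝ) (_ : 0 < l), ENNReal.ofReal l * (volume {x ∈ E | l < |f x|}) ^ (1 / r.toReal)

/-- The uniformly local quasinorm `|||f|||_{r,ρ} = sup_x ‖f‖_{L^{r,∞}(B(x,ρ))}`
(for `r = ∞` it is the `L^∞(ℝ^N)` norm). -/
noncomputable def ulocNorm (N : ℕ) (r : ℝ≥0∞) (ρ : ℝ) (f : Euc N → ℝ) : ℝ≥0∞ :=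
  if r = ⊤ then essSup (fun x => ENNReal.ofReal |f x|) volume
  else ⨆ x : Euc N, wnorm N r f (Metric.ball x ρ)

/-- `u ∈ L^∞(τ, T-τ; L^∞(ℝ^N))` for every `τ ∈ (0, T/2)`. -/
def LocBdd (N : ℕ) (T : ℝ≥0∞) (u : Euc N → ℝ → ℝ) : Prop :=
  ∀ τ : ℝ, 0 < τ → ENNReal.ofReal (2 * τ) < T →
    ∃ M : ℝ, ∀ t : ℝ, τ ≤ t → ENNReal.ofReal (t + τ) ≤ T →
      ∀ᵐ x ∂(volume : Measure (Euc N)), |u x t| ≤ M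

/-- Regularity requirements on a pair `(u,v)`: nonnegativity, joint measurability and
uniform boundedness away from `t = 0` and `t = T`. -/
def PairRegular (N : ℕ) (T : ℝ≥0∞) (u v : Euc N → ℝ → ℝ) : Prop :=
  (∀ x t, 0 ≤ u x t) ∧ (∀ x t, 0 ≤ v x t) ∧
  Measurable (Function.uncurry u) ∧ Measurable (Function.uncurry v) ∧
  LocBdd N T u ∧ LocBdd N T v

/-- The Duhamel identities for the system (S) `∂ₜu = Δu + v^p`, `∂ₜv = Δv + u^q` at time `t`. -/
def DuhamelSys (N : ℕ) (p q : ℝ) (u₀ v₀ : Euc N → ℝ) (u v : Euc N → ℝ → ℝ) (t : ℝ) : Prop :=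
  (∀ᵐ x ∂(volume : Measure (Euc N)), ENNReal.ofReal (u x t) =
      heatS N t u₀ x + ∫⁻ s in Set.Ioo 0 t, heatS N (t - s) (fun y => v y s ^ p) x) ∧
  (∀ᵐ x ∂(volume : Measure (Euc N)), ENNReal.ofReal (v x t) =
      heatS N t v₀ x + ∫⁻ s in Set.Ioo 0 t, heatS N (t - s) (fun y => u y s ^ q) x)

/-- The Duhamel inequalities (`≥`, with finite left-hand side) for the system (S) at time `t`. -/
def DuhamelSuperSys (N : ℕ) (p q : ℝ) (u₀ v₀ : Euc N → ℝ) (u v : Euc N → ℝ → ℝ) (t : ℝ) : Prop :=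
  (∀ᵐ x ∂(volume : Measure (Euc N)),
      heatS N t u₀ x + (∫⁻ s in Set.Ioo 0 t, heatS N (t - s) (fun y => v y s ^ p) x) ≤
        ENNReal.ofReal (u x t)) ∧
  (∀ᵐ x ∂(volume : Measure (Euc N)),
      heatS N t v₀ x + (∫⁻ s in Set.Ioo 0 t, heatS N (t - s) (fun y => u y s ^ q) x) ≤
        ENNReal.ofReal (v x t))

/-- `(u,v)` is a solution of the system (S) on `ℝ^N × (0,T)`. -/
def IsSolSys (N : ℕ) (p q : ℝ) (u₀ v₀ : Euc N → ℝ) (T : ℝ≥0∞) (u v : Euc N → ℝ → ℝ) : Prop :=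
  PairRegular N T u v ∧
  ∀ t : ℝ, 0 < t → ENNReal.ofReal t < T → DuhamelSys N p q u₀ v₀ u v t

/-- `(u,v)` is a supersolution of the system (S) on `ℝ^N × (0,T)`. -/
def IsSuperSys (N : ℕ) (p q : ℝ) (u₀ v₀ : Euc N → ℝ) (T : ℝ≥0∞) (u v : Euc N → ℝ → ℝ) : Prop :=
  PairRegular N T u v ∧
  ∀ t : ℝ, 0 < t → ENNReal.ofReal t < T → DuhamelSuperSys N p q u₀ v₀ u v t

/-- `(u,v)` is the minimal solution of the system (S) on `ℝ^N × (0,T)`. -/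
def IsMinSolSys (N : ℕ) (p q : ℝ) (u₀ v₀ : Euc N → ℝ) (T : ℝ≥0∞)
    (u v : Euc N → ℝ → ℝ) : Prop :=
  IsSolSys N p q u₀ v₀ T u v ∧
  ∀ u' v' : Euc N → ℝ → ℝ, IsSolSys N p q u₀ v₀ T u' v' →
    ∀ t : ℝ, 0 < t → ENNReal.ofReal t < T →
      (∀ᵐ x ∂(volume : Measure (Euc N)), u x t ≤ u' x t) ∧
      (∀ᵐ x ∂(volume : Measure (Euc N)), v x t ≤ v' x t)

/-- Regularity requirements on a scalar function `w`. -/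
def ScalarRegular (N : ℕ) (T : ℝ≥0∞) (w : Euc N → ℝ → ℝ) : Prop :=
  (∀ x t, 0 ≤ w x t) ∧ Measurable (Function.uncurry w) ∧ LocBdd N T w

/-- The Duhamel identity for the scalar problem (E) `∂ₜw = Δw + α w^A + β w^B` at time `t`. -/
def DuhamelScalar (N : ℕ) (α β A B : ℝ) (w₀ : Euc N → ℝ) (w : Euc N → ℝ → ℝ) (t : ℝ) : Prop :=
  ∀ᵐ x ∂(volume : Measure (Euc N)), ENNReal.ofReal (w x t) =
    heatS N t w₀ x +
      ∫⁻ s in Set.Ioo 0 t, heatS N (t - s) (fun y => α * w y s ^ A + β * w y s ^ B) x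

/-- The Duhamel inequality (`≥`, with finite left-hand side) for the scalar problem (E). -/
def DuhamelSuperScalar (N : ℕ) (α β A B : ℝ) (w₀ : Euc N → ℝ) (w : Euc N → ℝ → ℝ)
    (t : ℝ) : Prop :=
  ∀ᵐ x ∂(volume : Measure (Euc N)),
    heatS N t w₀ x +
        (∫⁻ s in Set.Ioo 0 t, heatS N (t - s) (fun y => α * w y s ^ A + β * w y s ^ B) x) ≤
      ENNReal.ofReal (w x t)

/-- `w` is a solution of the scalar problem (E) on `ℝ^N × (0,T)`. -/
def IsSolScalar (N : ℕ) (α β A B : ℝ) (w₀ : Euc N → ℝ) (T : ℝ≥0∞)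
    (w : Euc N → ℝ → ℝ) : Prop :=
  ScalarRegular N T w ∧
  ∀ t : ℝ, 0 < t → ENNReal.ofReal t < T → DuhamelScalar N α β A B w₀ w t

/-- `w` is a supersolution of the scalar problem (E) on `ℝ^N × (0,T)`. -/
def IsSuperScalar (N : ℕ) (α β A B : ℝ) (w₀ : Euc N → ℝ) (T : ℝ≥0∞)
    (w : Euc N → ℝ → ℝ) : Prop :=
  ScalarRegular N T w ∧
  ∀ t : ℝ, 0 < t → ENNReal.ofReal t < T → DuhamelSuperScalar N α β A B w₀ w t

/-- The Duhamel identities for the strongly coupled system (SC)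
`∂ₜu = Δu + u^{p₁} v^{p₂}`, `∂ₜv = Δv + u^{q₁} v^{q₂}` at time `t`. -/
def DuhamelSC (N : ℕ) (p₁ p₂ q₁ q₂ : ℝ) (u₀ v₀ : Euc N → ℝ) (u v : Euc N → ℝ → ℝ)
    (t : ℝ) : Prop :=
  (∀ᵐ x ∂(volume : Measure (Euc N)), ENNReal.ofReal (u x t) =
      heatS N t u₀ x +
        ∫⁻ s in Set.Ioo 0 t, heatS N (t - s) (fun y => u y s ^ p₁ * v y s ^ p₂) x) ∧
  (∀ᵐ x ∂(volume : Measure (Euc N)), ENNReal.ofReal (v x t) =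
      heatS N t v₀ x +
        ∫⁻ s in Set.Ioo 0 t, heatS N (t - s) (fun y => u y s ^ q₁ * v y s ^ q₂) x)

/-- `(u,v)` is a solution of the strongly coupled system (SC) on `ℝ^N × (0,T)`. -/
def IsSolSC (N : ℕ) (p₁ p₂ q₁ q₂ : ℝ) (u₀ v₀ : Euc N → ℝ) (T : ℝ≥0∞)
    (u v : Euc N → ℝ → ℝ) : Prop :=
  PairRegular N T u v ∧
  ∀ t : ℝ, 0 < t → ENNReal.ofReal t < T → DuhamelSC N p₁ p₂ q₁ q₂ u₀ v₀ u v t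

/-
Let `α, β ∈ (0, 1]` and `κ > 0` be such that `αp = κ + β` and `βq = κ + α`, and let
`w` dominate `u(t₀)^(1/β)` and `v(t₀)^(1/α)`. Concavity of the powers and the semigroup property
make `(2 (S(t - t₀)w)^β, 2 (S(t - t₀)w)^α)` a barrier for `(u, v)` on `(t₀, T)` as soon as
`∫ ‖S(s - t₀)w‖_∞^κ ds` over `(t₀, T)` is small. A weak-Lebesgue smoothing estimate on balls of
radius `(T - t₀)^(1/2)` shows that this integral is small once the rescaled norms at a single time
`t₀` are small; then `(u, v)` stays bounded up to `T`, so at a blow-up time the rescaled norms are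
bounded below at every `t₀`.
-/

section HeatKernel

lemma norm_sq_div_add_norm_sub_sq_div {E : Type*} [NormedAddCommGroup E] [InnerProductSpace ℝ E]
    {t s : ℝ} (ht : 0 < t) (hs : 0 < s) (y z : E) :
    ‖y‖ ^ 2 / t + ‖z - y‖ ^ 2 / s =
      ‖z‖ ^ 2 / (t + s) + (t + s) / (t * s) * ‖y - (t / (t + s)) • z‖ ^ 2 := by
  rw [norm_sub_sq_real, norm_sub_sq_real, norm_smul, real_inner_smul_right, real_inner_comm y z,
    mul_pow, Real.norm_eq_abs, sq_abs]
  field_simp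
  ring

lemma lintegral_exp_neg_mul_norm_sq (N : ℕ) {b : ℝ} (hb : 0 < b) :
    ∫⁻ y : Euc N, ENNReal.ofReal (Real.exp (-b * ‖y‖ ^ 2)) =
      ENNReal.ofReal ((Real.pi / b) ^ ((N : ℝ) / 2)) := by
  have hint := GaussianFourier.integral_rexp_neg_mul_sq_norm (V := Euc N) hb
  rw [finrank_euclideanSpace_fin] at hint
  have hpos : 0 < (Real.pi / b) ^ ((N : ℝ) / 2) := by positivity
  rw [← hint, ofReal_integral_eq_lintegral_ofReal]
  · exact not_imp_comm.1 integral_undef (hint.trans_ne hpos.ne')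
  · exact .of_forall fun y => (Real.exp_pos _).le

/-- The Gauss kernel `(4πt)^{-N/2} exp(-|z|²/(4t))`, with values in `[0,∞]`. -/
def heatKernel (N : ℕ) (t : ℝ) (z : Euc N) : ℝ≥0∞ :=
  ENNReal.ofReal ((4 * Real.pi * t) ^ (-(N : ℝ) / 2) * Real.exp (-‖z‖ ^ 2 / (4 * t)))

/-- The heat semigroup acting on `[0,∞]`-valued functions; unlike `heatS`, it can be iterated. -/
def heatFlow (N : ℕ) (t : ℝ) (φ : Euc N → ℝ≥0∞) (x : Euc N) : ℝ≥0∞ :=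
  ∫⁻ y, φ y * heatKernel N t (x - y)

variable {N : ℕ} {t s : ℝ} {φ ψ : Euc N → ℝ≥0∞}

lemma heatS_eq_heatFlow (ht : 0 < t) (f : Euc N → ℝ) :
    heatS N t f = heatFlow N t fun y => ENNReal.ofReal (f y) := by
  ext x
  refine lintegral_congr fun y => ?_
  rw [heatKernel, ENNReal.ofReal_mul (by positivity), mul_comm]

lemma heatFlow_eq_lconvolution (t : ℝ) (φ : Euc N → ℝ≥0∞) :
    heatFlow N t φ = φ ⋆ₗ heatKernel N t := by
  ext x
  simp only [heatFlow, lconvolution_def, sub_eq_neg_add]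

lemma measurable_uncurry_heatKernel (N : ℕ) :
    Measurable (Function.uncurry (heatKernel N)) := by
  unfold Function.uncurry heatKernel
  fun_prop

lemma measurable_heatKernel (N : ℕ) (t : ℝ) : Measurable (heatKernel N t) :=
  (measurable_uncurry_heatKernel N).of_uncurry_left

lemma measurable_heatKernel_const_sub (t : ℝ) (x : Euc N) :
    Measurable fun y => heatKernel N t (x - y) :=
  (measurable_heatKernel N t).comp (measurable_const_sub x)

lemma heatKernel_ne_top (t : ℝ) (z : Euc N) : heatKernel N t z ≠ ∞ :=
  ENNReal.ofReal_ne_top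

lemma lintegral_heatKernel (N : ℕ) (ht : 0 < t) : ∫⁻ z, heatKernel N t z = 1 := by
  have hsplit : ∀ z, heatKernel N t z = ENNReal.ofReal ((4 * Real.pi * t) ^ (-(N : ℝ) / 2)) *
      ENNReal.ofReal (Real.exp (-(4 * t)⁻¹ * ‖z‖ ^ 2)) := fun z => by
    rw [heatKernel, ENNReal.ofReal_mul (by positivity)]
    ring_nf
  simp_rw [hsplit]
  rw [lintegral_const_mul' _ _ ENNReal.ofReal_ne_top,
    lintegral_exp_neg_mul_norm_sq N (by positivity), ← ENNReal.ofReal_mul (by positivity),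
    div_inv_eq_mul, show Real.pi * (4 * t) = 4 * Real.pi * t by ring,
    ← Real.rpow_add (by positivity)]
  simp [neg_div]

lemma heatKernel_mul_heatKernel (ht : 0 < t) (hs : 0 < s) (y z : Euc N) :
    heatKernel N t y * heatKernel N s (z - y) =
      heatKernel N (t + s) z * heatKernel N (t * s / (t + s)) (y - (t / (t + s)) • z) := by
  have hcoeff : (4 * Real.pi * t) ^ (-(N : ℝ) / 2) * (4 * Real.pi * s) ^ (-(N : ℝ) / 2) =
      (4 * Real.pi * (t + s)) ^ (-(N : ℝ) / 2) *
        (4 * Real.pi * (t * s / (t + s))) ^ (-(N : ℝ) / 2) := by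
    rw [← Real.mul_rpow (by positivity) (by positivity),
      ← Real.mul_rpow (by positivity) (by positivity)]
    congr 1
    field_simp
  have hexp : -‖y‖ ^ 2 / (4 * t) + -‖z - y‖ ^ 2 / (4 * s) = -‖z‖ ^ 2 / (4 * (t + s)) +
      -‖y - (t / (t + s)) • z‖ ^ 2 / (4 * (t * s / (t + s))) := by
    have := norm_sq_div_add_norm_sub_sq_div ht hs y z
    field_simp at this ⊢
    linarith
  simp only [heatKernel]
  rw [← ENNReal.ofReal_mul (by positivity), ← ENNReal.ofReal_mul (by positivity),
    mul_mul_mul_comm, ← Real.exp_add, hcoeff, hexp, Real.exp_add, mul_mul_mul_comm]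

lemma heatKernel_lconvolution_heatKernel (ht : 0 < t) (hs : 0 < s) :
    heatKernel N t ⋆ₗ heatKernel N s = heatKernel N (t + s) := by
  ext z
  simp only [lconvolution_def, neg_add_eq_sub]
  calc ∫⁻ y, heatKernel N t y * heatKernel N s (z - y)
      = ∫⁻ y, heatKernel N (t + s) z *
          heatKernel N (t * s / (t + s)) (y - (t / (t + s)) • z) := by
        simp_rw [heatKernel_mul_heatKernel ht hs]
    _ = heatKernel N (t + s) z := by
        rw [lintegral_const_mul' _ _ (heatKernel_ne_top _ z),
          lintegral_sub_right_eq_self (heatKernel N (t * s / (t + s))),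
          lintegral_heatKernel N (by positivity), mul_one]

lemma heatFlow_heatFlow (ht : 0 < t) (hs : 0 < s) (hφ : Measurable φ) :
    heatFlow N t (heatFlow N s φ) = heatFlow N (t + s) φ := by
  simp only [heatFlow_eq_lconvolution]
  rw [← lconvolution_assoc hφ (measurable_heatKernel N s) (measurable_heatKernel N t),
    heatKernel_lconvolution_heatKernel hs ht, add_comm]

lemma heatFlow_mono_ae (h : φ ≤ᵐ[volume] ψ) (x : Euc N) :
    heatFlow N t φ x ≤ heatFlow N t ψ x := by
  refine lintegral_mono_ae ?_
  filter_upwards [h] with y hy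
  gcongr

lemma heatFlow_congr_ae (h : φ =ᵐ[volume] ψ) (x : Euc N) :
    heatFlow N t φ x = heatFlow N t ψ x :=
  (heatFlow_mono_ae h.le x).antisymm (heatFlow_mono_ae h.symm.le x)

lemma heatFlow_const (ht : 0 < t) (c : ℝ≥0∞) (x : Euc N) :
    heatFlow N t (fun _ => c) x = c := by
  rw [heatFlow, lintegral_const_mul _ (measurable_heatKernel_const_sub t x),
    lintegral_sub_left_eq_self (heatKernel N t), lintegral_heatKernel N ht, mul_one]

lemma heatFlow_const_mul {c : ℝ≥0∞} (hc : c ≠ ∞) (x : Euc N) :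
    heatFlow N t (fun y => c * φ y) x = c * heatFlow N t φ x := by
  simp only [heatFlow, mul_assoc]
  exact lintegral_const_mul' c _ hc

lemma heatFlow_add (hφ : Measurable φ) (x : Euc N) :
    heatFlow N t (fun y => φ y + ψ y) x = heatFlow N t φ x + heatFlow N t ψ x := by
  simp only [heatFlow, add_mul]
  exact lintegral_add_left (hφ.mul (measurable_heatKernel_const_sub t x)) _

lemma measurable_heatFlow_sub {F : Euc N → ℝ → ℝ≥0∞} (hF : Measurable (Function.uncurry F)) :
    Measurable fun a : (Euc N × ℝ) × ℝ => heatFlow N (a.1.2 - a.2) (F · a.2) a.1.1 := by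
  refine Measurable.lintegral_prod_right' (f := fun b : ((Euc N × ℝ) × ℝ) × Euc N =>
    F b.2 b.1.2 * heatKernel N (b.1.1.2 - b.1.2) (b.1.1.1 - b.2)) (.mul ?_ ?_)
  · exact hF.comp (by fun_prop : Measurable fun b : ((Euc N × ℝ) × ℝ) × Euc N => (b.2, b.1.2))
  · exact (measurable_uncurry_heatKernel N).comp (by fun_prop :
      Measurable fun b : ((Euc N × ℝ) × ℝ) × Euc N => (b.1.1.2 - b.1.2, b.1.1.1 - b.2))

lemma measurable_heatFlow (hφ : Measurable φ) (t : ℝ) : Measurable (heatFlow N t φ) := by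
  rw [heatFlow_eq_lconvolution]
  exact measurable_lconvolution _ hφ (measurable_heatKernel N t)

lemma heatFlow_rpow_le {m : ℝ} (ht : 0 < t) (hm : 0 < m) (hm1 : m ≤ 1) (hφ : Measurable φ)
    (x : Euc N) : heatFlow N t (fun y => φ y ^ m) x ≤ heatFlow N t φ x ^ m := by
  have hK := measurable_heatKernel_const_sub t x
  have hholder := ENNReal.lintegral_mul_norm_pow_le (μ := volume) (hφ.mul hK).aemeasurable
    hK.aemeasurable hm.le (sub_nonneg.2 hm1) (by ring)
  rw [lintegral_sub_left_eq_self (heatKernel N t), lintegral_heatKernel N ht, ENNReal.one_rpow,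
    mul_one] at hholder
  refine le_of_eq_of_le (lintegral_congr fun y => ?_) hholder
  rw [Pi.mul_apply, ENNReal.mul_rpow_of_nonneg _ _ hm.le, mul_assoc,
    ← ENNReal.rpow_add_of_nonneg _ _ hm.le (sub_nonneg.2 hm1), add_sub_cancel, ENNReal.rpow_one]

end HeatKernel

section Averages

variable {α : Type*} [MeasurableSpace α] {μ : Measure α} {f : α → ℝ} {r K : ℝ}

lemma measure_lt_le_of_weakLp (hr : 0 < r) (hK : 0 < K)
    (h : ∀ l : ℝ, 0 < l → ENNReal.ofReal l * μ {a | l < f a} ^ (1 / r) ≤ ENNReal.ofReal K)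
    {l : ℝ} (hl : 0 < l) : μ {a | l < f a} ≤ ENNReal.ofReal (K ^ r * l ^ (-r)) := by
  have hroot : μ {a | l < f a} ^ (1 / r) ≤ ENNReal.ofReal (K / l) := by
    rw [ENNReal.ofReal_div_of_pos hl, ENNReal.le_div_iff_mul_le (by simp [hl]) (by simp), mul_comm]
    exact h l hl
  calc μ {a | l < f a} = (μ {a | l < f a} ^ (1 / r)) ^ r := by
        rw [← ENNReal.rpow_mul, one_div_mul_cancel hr.ne', ENNReal.rpow_one]
    _ ≤ ENNReal.ofReal (K / l) ^ r := by gcongr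
    _ = ENNReal.ofReal (K ^ r * l ^ (-r)) := by
        rw [ENNReal.ofReal_rpow_of_pos (by positivity), Real.div_rpow hK.le hl.le,
          Real.rpow_neg hl.le, div_eq_mul_inv]

lemma lintegral_Ioi_ofReal_rpow {L : ℝ} (hr : 1 < r) (hL : 0 < L) :
    ∫⁻ l in Set.Ioi L, ENNReal.ofReal (l ^ (-r)) = ENNReal.ofReal (L ^ (1 - r) / (r - 1)) := by
  have hr' : -r < -1 := by linarith
  rw [← ofReal_integral_eq_lintegral_ofReal (integrableOn_Ioi_rpow_of_lt hr' hL)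
    (ae_restrict_of_forall_mem measurableSet_Ioi fun l hl => Real.rpow_nonneg (hL.trans hl).le _),
    integral_Ioi_rpow_of_lt hr' hL, ← neg_div_neg_eq, neg_neg]
  ring_nf

lemma lintegral_le_of_weakLp {b : ℝ} (hr : 1 < r) (hK : 0 < K) (hb : 0 < b)
    (hμ : μ Set.univ ≤ ENNReal.ofReal b) (hf : AEMeasurable f μ) (hf0 : 0 ≤ᵐ[μ] f)
    (h : ∀ l : ℝ, 0 < l → ENNReal.ofReal l * μ {a | l < f a} ^ (1 / r) ≤ ENNReal.ofReal K) :
    ∫⁻ a, ENNReal.ofReal (f a) ∂μ ≤ ENNReal.ofReal (r / (r - 1) * K * b ^ (1 - 1 / r)) := by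
  have hr0 : 0 < r := one_pos.trans hr
  have hr1 : 0 < r - 1 := sub_pos.2 hr
  -- The level at which the bounds `b` and `K ^ r * l ^ (-r)` for `μ {a | l < f a}` agree.
  set L : ℝ := K * b ^ (-(1 / r)) with hL
  have hL0 : 0 < L := by positivity
  have hlow : ∫⁻ l in Set.Ioc 0 L, μ {a | l < f a} ≤ ENNReal.ofReal (b * L) := by
    calc ∫⁻ l in Set.Ioc 0 L, μ {a | l < f a} ≤ ∫⁻ _ in Set.Ioc 0 L, ENNReal.ofReal b :=
          lintegral_mono fun l => (measure_mono (Set.subset_univ _)).trans hμ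
      _ = ENNReal.ofReal (b * L) := by
          rw [setLIntegral_const, Real.volume_Ioc, sub_zero, ENNReal.ofReal_mul hb.le]
  have htail : ∫⁻ l in Set.Ioi L, μ {a | l < f a} ≤
      ENNReal.ofReal (K ^ r * (L ^ (1 - r) / (r - 1))) := by
    calc ∫⁻ l in Set.Ioi L, μ {a | l < f a}
        ≤ ∫⁻ l in Set.Ioi L, ENNReal.ofReal (K ^ r) * ENNReal.ofReal (l ^ (-r)) :=
          setLIntegral_mono (by fun_prop) fun l hl => by
            rw [← ENNReal.ofReal_mul (by positivity)]
            exact measure_lt_le_of_weakLp hr0 hK h (hL0.trans hl)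
      _ = ENNReal.ofReal (K ^ r * (L ^ (1 - r) / (r - 1))) := by
          rw [lintegral_const_mul' _ _ ENNReal.ofReal_ne_top, lintegral_Ioi_ofReal_rpow hr hL0,
            ← ENNReal.ofReal_mul (by positivity)]
  have hbL : b * L = K * b ^ (1 - 1 / r) := by
    rw [hL, sub_eq_add_neg, Real.rpow_add hb, Real.rpow_one]
    ring
  have hKL : K ^ r * L ^ (1 - r) = K * b ^ (1 - 1 / r) := by
    rw [hL, Real.mul_rpow hK.le (by positivity), ← Real.rpow_mul hb.le, ← mul_assoc,
      ← Real.rpow_add hK, add_sub_cancel, Real.rpow_one]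
    congr 2
    field_simp
    ring
  rw [lintegral_eq_lintegral_meas_lt _ hf0 hf, ← Set.Ioc_union_Ioi_eq_Ioi hL0.le]
  refine (lintegral_union_le _ _ _).trans ((add_le_add hlow htail).trans_eq ?_)
  rw [← ENNReal.ofReal_add (by positivity) (by positivity), hbL, ← mul_div_assoc, hKL]
  congr 1
  field_simp
  ring

lemma lintegral_lintegral_ball_swap {X : Type*} [PseudoMetricSpace X] [MeasurableSpace X]
    [OpensMeasurableSpace X] [SecondCountableTopology X] {ν : Measure X} [SFinite ν]
    {F : X → X → ℝ≥0∞} (hF : Measurable (Function.uncurry F)) (ρ : ℝ) :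
    ∫⁻ y, ∫⁻ z in Metric.ball y ρ, F y z ∂ν ∂ν = ∫⁻ z, ∫⁻ y in Metric.ball z ρ, F y z ∂ν ∂ν := by
  have hball : MeasurableSet {a : X × X | dist a.2 a.1 < ρ} :=
    measurableSet_lt (measurable_snd.dist measurable_fst) measurable_const
  have hindicator : ∀ (y : X) (G : X → ℝ≥0∞),
      ∫⁻ z in Metric.ball y ρ, G z ∂ν = ∫⁻ z, (Metric.ball y ρ).indicator G z ∂ν :=
    fun y G => (lintegral_indicator measurableSet_ball G).symm
  simp_rw [hindicator]
  rw [lintegral_lintegral_swap]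
  · refine lintegral_congr fun z => lintegral_congr fun y => ?_
    simp [Set.indicator, dist_comm]
  · exact (hF.indicator hball).aemeasurable

end Averages

section Smoothing

variable {N : ℕ} {t : ℝ}

lemma volume_ball_sqrt (ht : 0 < t) (z : Euc N) : volume (Metric.ball z √t) =
    ENNReal.ofReal (volume.real (Metric.ball (0 : Euc N) 1) * t ^ ((N : ℝ) / 2)) := by
  rw [Measure.addHaar_ball_of_pos _ _ (Real.sqrt_pos.2 ht), finrank_euclideanSpace_fin, mul_comm,
    ENNReal.ofReal_mul (by positivity), ofReal_measureReal measure_ball_lt_top.ne,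
    Real.sqrt_eq_rpow, ← Real.rpow_natCast, ← Real.rpow_mul ht.le, one_div_mul_eq_div]

lemma heatKernel_le_of_norm_sub_sq_le (ht : 0 < t) {y z : Euc N} (h : ‖z - y‖ ^ 2 ≤ t) :
    heatKernel N t y ≤
      ENNReal.ofReal (Real.exp (1 / 4) * 2 ^ ((N : ℝ) / 2)) * heatKernel N (2 * t) z := by
  have hz : ‖z‖ ^ 2 ≤ 2 * ‖y‖ ^ 2 + 2 * t := by
    have := norm_add_le y (z - y)
    rw [add_sub_cancel] at this
    nlinarith [sq_nonneg (‖y‖ - ‖z - y‖), norm_nonneg z]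
  have hexp : Real.exp (-‖y‖ ^ 2 / (4 * t)) ≤
      Real.exp (1 / 4) * Real.exp (-‖z‖ ^ 2 / (4 * (2 * t))) := by
    rw [← Real.exp_add, Real.exp_le_exp, ← sub_nonneg]
    have : 0 ≤ (2 * ‖y‖ ^ 2 + 2 * t - ‖z‖ ^ 2) / (8 * t) :=
      div_nonneg (sub_nonneg.2 hz) (by positivity)
    refine this.trans_eq ?_
    field_simp
    ring
  have hcoeff : (4 * Real.pi * t) ^ (-(N : ℝ) / 2) =
      2 ^ ((N : ℝ) / 2) * (4 * Real.pi * (2 * t)) ^ (-(N : ℝ) / 2) := by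
    rw [mul_left_comm, Real.mul_rpow two_pos.le (by positivity), ← mul_assoc,
      ← Real.rpow_add two_pos, neg_div, add_neg_cancel, Real.rpow_zero, one_mul]
  rw [heatKernel, heatKernel, ← ENNReal.ofReal_mul (by positivity)]
  refine ENNReal.ofReal_le_ofReal ?_
  calc (4 * Real.pi * t) ^ (-(N : ℝ) / 2) * Real.exp (-‖y‖ ^ 2 / (4 * t))
      ≤ (4 * Real.pi * t) ^ (-(N : ℝ) / 2) *
          (Real.exp (1 / 4) * Real.exp (-‖z‖ ^ 2 / (4 * (2 * t)))) := by gcongr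
    _ = _ := by rw [hcoeff]; ring

-- Averaging over a ball of radius `√t` costs only a constant and a doubling of time.
lemma volume_ball_mul_heatFlow_le (ht : 0 < t) {φ : Euc N → ℝ≥0∞} (hφ : Measurable φ) {M : ℝ≥0∞}
    (hM : ∀ z, ∫⁻ y in Metric.ball z √t, φ y ≤ M) (x : Euc N) :
    volume (Metric.ball (0 : Euc N) √t) * heatFlow N t φ x ≤
      ENNReal.ofReal (Real.exp (1 / 4) * 2 ^ ((N : ℝ) / 2)) * M := by
  set D := ENNReal.ofReal (Real.exp (1 / 4) * 2 ^ ((N : ℝ) / 2))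
  have hK := measurable_heatKernel_const_sub (N := N) (2 * t) x
  calc volume (Metric.ball (0 : Euc N) √t) * heatFlow N t φ x
      = ∫⁻ y, ∫⁻ _ in Metric.ball y √t, φ y * heatKernel N t (x - y) := by
        simp_rw [setLIntegral_const, volume_ball_sqrt ht]
        rw [lintegral_mul_const' _ _ ENNReal.ofReal_ne_top, mul_comm, heatFlow]
    _ ≤ ∫⁻ y, ∫⁻ z in Metric.ball y √t, φ y * (D * heatKernel N (2 * t) (x - z)) := by
        refine lintegral_mono fun y => setLIntegral_mono (by fun_prop) fun z hz => ?_
        gcongr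
        refine heatKernel_le_of_norm_sub_sq_le ht ?_
        rw [show x - z - (x - y) = y - z by abel, ← dist_eq_norm]
        exact (Real.le_sqrt dist_nonneg ht.le).1 (Metric.mem_ball'.1 hz).le
    _ = ∫⁻ z, ∫⁻ y in Metric.ball z √t, φ y * (D * heatKernel N (2 * t) (x - z)) :=
        lintegral_lintegral_ball_swap
          ((hφ.comp measurable_fst).mul ((hK.comp measurable_snd).const_mul D)) _
    _ ≤ ∫⁻ z, M * (D * heatKernel N (2 * t) (x - z)) := by
        refine lintegral_mono fun z => ?_
        dsimp only
        rw [lintegral_mul_const _ hφ]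
        gcongr
        exact hM z
    _ = D * M := by
        simp_rw [← mul_assoc]
        rw [lintegral_const_mul _ hK, lintegral_sub_left_eq_self (heatKernel N (2 * t)),
          lintegral_heatKernel N (by positivity), mul_one, mul_comm]

lemma heatFlow_le_of_setLIntegral_ball_le (N : ℕ) : ∃ C : ℝ, 0 < C ∧
    ∀ (φ : Euc N → ℝ≥0∞) (t M : ℝ), Measurable φ → 0 < t →
      (∀ z, ∫⁻ y in Metric.ball z √t, φ y ≤ ENNReal.ofReal M) →
      ∀ x, heatFlow N t φ x ≤ ENNReal.ofReal (C * t ^ (-((N : ℝ) / 2)) * M) := by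
  have hω : 0 < volume.real (Metric.ball (0 : Euc N) 1) :=
    ENNReal.toReal_pos (Metric.measure_ball_pos _ _ one_pos).ne' measure_ball_lt_top.ne
  refine ⟨Real.exp (1 / 4) * 2 ^ ((N : ℝ) / 2) / volume.real (Metric.ball (0 : Euc N) 1),
    by positivity, fun φ t M hφ ht hM x => ?_⟩
  have hpos : 0 < volume.real (Metric.ball (0 : Euc N) 1) * t ^ ((N : ℝ) / 2) := by positivity
  have havg := volume_ball_mul_heatFlow_le ht hφ hM x
  rw [volume_ball_sqrt ht, ← ENNReal.ofReal_mul (by positivity), mul_comm,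
    ← ENNReal.le_div_iff_mul_le (.inl (ENNReal.ofReal_pos.2 hpos).ne') (by simp),
    ← ENNReal.ofReal_div_of_pos hpos] at havg
  refine havg.trans_eq (congrArg _ ?_)
  rw [Real.rpow_neg ht.le]
  field_simp

end Smoothing

section UniformlyLocalNorm

variable {N : ℕ} {r : ℝ≥0∞}

lemma wnorm_mono (r : ℝ≥0∞) (f : Euc N → ℝ) {E F : Set (Euc N)} (hEF : E ⊆ F) :
    wnorm N r f E ≤ wnorm N r f F := by
  unfold wnorm
  split_ifs
  · exact lintegral_mono_set hEF
  · exact essSup_mono_measure' (Measure.restrict_mono_set _ hEF)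
  · gcongr

lemma ulocNorm_mono (r : ℝ≥0∞) (f : Euc N → ℝ) {ρ ρ' : ℝ} (hρ : ρ ≤ ρ') :
    ulocNorm N r ρ f ≤ ulocNorm N r ρ' f := by
  unfold ulocNorm
  split_ifs
  · exact le_rfl
  · exact iSup_mono fun x => wnorm_mono r f (Metric.ball_subset_ball hρ)

lemma essSup_ofReal_abs_rpow_le {m : ℝ} (hm : 0 < m) {f : Euc N → ℝ} (hf0 : ∀ x, 0 ≤ f x) :
    essSup (fun x => ENNReal.ofReal |f x ^ (1 / m)|) volume ≤
      essSup (fun x => ENNReal.ofReal |f x|) volume ^ (1 / m) := by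
  refine essSup_le_of_ae_le _ ?_
  filter_upwards [ENNReal.ae_le_essSup (μ := volume) fun x => ENNReal.ofReal |f x|] with x hx
  rw [Real.abs_rpow_of_nonneg (hf0 x), ← ENNReal.ofReal_rpow_of_nonneg (abs_nonneg _)
    (by positivity)]
  gcongr

lemma wnorm_rpow_le {m : ℝ} (hm : 0 < m) (hr : r ≠ 1) (hr' : r ≠ ∞)
    (hmr : ENNReal.ofReal m * r ≠ 1) {f : Euc N → ℝ} (hf0 : ∀ x, 0 ≤ f x) (E : Set (Euc N)) :
    wnorm N (ENNReal.ofReal m * r) (fun x => f x ^ (1 / m)) E ≤ wnorm N r f E ^ (1 / m) := by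
  have hmr' : ENNReal.ofReal m * r ≠ ∞ := ENNReal.mul_ne_top ENNReal.ofReal_ne_top hr'
  rw [wnorm, wnorm, if_neg hmr, if_neg hmr', if_neg hr, if_neg hr']
  refine iSup₂_le fun l hl => ?_
  have hlevel : {x ∈ E | l < |f x ^ (1 / m)|} = {x ∈ E | l ^ m < |f x|} := by
    ext x
    have hroot : l < |f x| ^ (1 / m) ↔ l ^ m < |f x| := by
      rw [one_div, Real.lt_rpow_inv_iff_of_pos hl.le (abs_nonneg _) hm]
    simp only [Set.mem_ofPred_eq, Real.abs_rpow_of_nonneg (hf0 x), hroot]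
  calc ENNReal.ofReal l * volume {x ∈ E | l < |f x ^ (1 / m)|} ^
        (1 / (ENNReal.ofReal m * r).toReal)
      = (ENNReal.ofReal (l ^ m) * volume {x ∈ E | l ^ m < |f x|} ^ (1 / r.toReal)) ^ (1 / m) := by
        rw [hlevel, ENNReal.mul_rpow_of_nonneg _ _ (by positivity), ← ENNReal.rpow_mul,
          ENNReal.ofReal_rpow_of_nonneg (by positivity) (by positivity), ← Real.rpow_mul hl.le,
          mul_one_div_cancel hm.ne', Real.rpow_one, ENNReal.toReal_mul,
          ENNReal.toReal_ofReal hm.le, one_div_mul_one_div_rev]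
    _ ≤ _ := by
        gcongr
        exact le_iSup₂ (f := fun (l : ℝ) (_ : 0 < l) => ENNReal.ofReal l *
          volume {x ∈ E | l < |f x|} ^ (1 / r.toReal)) (l ^ m) (by positivity)

lemma ulocNorm_rpow_le {m : ℝ} (hm : 0 < m) (hr : r ≠ 1) (hmr : ENNReal.ofReal m * r ≠ 1)
    {f : Euc N → ℝ} (hf0 : ∀ x, 0 ≤ f x) (ρ : ℝ) :
    ulocNorm N (ENNReal.ofReal m * r) ρ (fun x => f x ^ (1 / m)) ≤ ulocNorm N r ρ f ^ (1 / m) := by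
  by_cases hr' : r = ∞
  · have hmr' : ENNReal.ofReal m * r = ∞ := by
      rw [hr', ENNReal.mul_top (ENNReal.ofReal_pos.2 hm).ne']
    rw [ulocNorm, ulocNorm, if_pos hmr', if_pos hr']
    exact essSup_ofReal_abs_rpow_le hm hf0
  · have hmr' : ENNReal.ofReal m * r ≠ ∞ := ENNReal.mul_ne_top ENNReal.ofReal_ne_top hr'
    rw [ulocNorm, ulocNorm, if_neg hmr', if_neg hr']
    refine iSup_le fun x => (wnorm_rpow_le hm hr hr' hmr hf0 _).trans ?_
    gcongr
    exact le_iSup (fun x => wnorm N r f (Metric.ball x ρ)) x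

lemma setLIntegral_le_of_ulocNorm_top_le {f : Euc N → ℝ} {ρ K : ℝ}
    (hf : ulocNorm N ∞ ρ f ≤ ENNReal.ofReal K) (E : Set (Euc N)) :
    ∫⁻ y in E, ENNReal.ofReal (f y) ≤ ENNReal.ofReal K * volume E := by
  rw [ulocNorm, if_pos rfl] at hf
  rw [← setLIntegral_const]
  refine lintegral_mono_ae (ae_restrict_of_ae ?_)
  filter_upwards [ENNReal.ae_le_essSup (μ := volume) fun x => ENNReal.ofReal |f x|] with y hy
  exact (ENNReal.ofReal_le_ofReal (le_abs_self _)).trans (hy.trans hf)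

lemma setLIntegral_le_of_wnorm_le (hr : 1 < r) (hr' : r ≠ ∞) {f : Euc N → ℝ} (hf : Measurable f)
    (hf0 : ∀ x, 0 ≤ f x) {E : Set (Euc N)} {b K : ℝ} (hb : 0 < b)
    (hE : volume E ≤ ENNReal.ofReal b) (hK : 0 < K) (hfK : wnorm N r f E ≤ ENNReal.ofReal K) :
    ∫⁻ y in E, ENNReal.ofReal (f y) ≤
      ENNReal.ofReal (r.toReal / (r.toReal - 1) * K * b ^ (1 - 1 / r.toReal)) := by
  have hr₁ : 1 < r.toReal := by simpa using ENNReal.toReal_strict_mono hr' hr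
  refine lintegral_le_of_weakLp hr₁ hK hb (by rwa [Measure.restrict_apply_univ])
    hf.aemeasurable (.of_forall hf0) fun l hl => ?_
  rw [wnorm, if_neg hr.ne', if_neg hr', iSup₂_le_iff] at hfK
  rw [Measure.restrict_apply (measurableSet_lt measurable_const hf), Set.inter_comm]
  simpa only [abs_of_nonneg (hf0 _)] using! hfK l hl

lemma setLIntegral_ball_sqrt_le_of_ulocNorm_le (N : ℕ) (hr : 1 < r) : ∃ C : ℝ, 0 < C ∧
    ∀ (f : Euc N → ℝ) (K s : ℝ), Measurable f → (∀ x, 0 ≤ f x) → 0 < K → 0 < s →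
      ulocNorm N r √s f ≤ ENNReal.ofReal K → ∀ z, ∫⁻ y in Metric.ball z √s, ENNReal.ofReal (f y) ≤
        ENNReal.ofReal (C * K * s ^ ((N : ℝ) / 2 - (N : ℝ) / 2 * r⁻¹.toReal)) := by
  set ω := volume.real (Metric.ball (0 : Euc N) 1)
  have hω : 0 < ω :=
    ENNReal.toReal_pos (Metric.measure_ball_pos _ _ one_pos).ne' measure_ball_lt_top.ne
  obtain rfl | hr' := eq_or_ne r ∞
  · refine ⟨ω, hω, fun f K s _ _ hK hs hfK z =>
      (setLIntegral_le_of_ulocNorm_top_le hfK _).trans_eq ?_⟩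
    rw [volume_ball_sqrt hs, ← ENNReal.ofReal_mul hK.le, ENNReal.inv_top, ENNReal.toReal_zero,
      mul_zero, sub_zero, mul_left_comm, mul_assoc]
  have hr₁ : 1 < r.toReal := by simpa using ENNReal.toReal_strict_mono hr' hr
  refine ⟨r.toReal / (r.toReal - 1) * ω ^ (1 - 1 / r.toReal),
    mul_pos (div_pos (one_pos.trans hr₁) (sub_pos.2 hr₁)) (by positivity),
    fun f K s hf hf0 hK hs hfK z => ?_⟩
  rw [ulocNorm, if_neg hr', iSup_le_iff] at hfK
  refine (setLIntegral_le_of_wnorm_le hr hr' hf hf0 (by positivity) (volume_ball_sqrt hs z).le hK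
    (hfK z)).trans_eq (congrArg _ ?_)
  rw [Real.mul_rpow hω.le (by positivity), ← Real.rpow_mul hs.le, ENNReal.toReal_inv]
  ring_nf

lemma heatFlow_le_of_ulocNorm_le (N : ℕ) (hr : 1 < r) : ∃ C : ℝ, 0 < C ∧
    ∀ (f : Euc N → ℝ) (K δ : ℝ), Measurable f → (∀ x, 0 ≤ f x) → 0 < K →
      ulocNorm N r √δ f ≤ ENNReal.ofReal K → ∀ s : ℝ, 0 < s → s ≤ δ → ∀ x,
      heatFlow N s (fun y => ENNReal.ofReal (f y)) x ≤
        ENNReal.ofReal (C * K * s ^ (-((N : ℝ) / 2 * r⁻¹.toReal))) := by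
  obtain ⟨A, hA, hflow⟩ := heatFlow_le_of_setLIntegral_ball_le N
  obtain ⟨B, hB, hball⟩ := setLIntegral_ball_sqrt_le_of_ulocNorm_le N hr
  refine ⟨A * B, by positivity, fun f K δ hf hf0 hK hfK s hs hsδ x => ?_⟩
  refine (hflow _ s _ hf.ennreal_ofReal hs (hball f K s hf hf0 hK hs
    ((ulocNorm_mono r f (Real.sqrt_le_sqrt hsδ)).trans hfK)) x).trans_eq (congrArg _ ?_)
  rw [sub_eq_add_neg, Real.rpow_add hs, Real.rpow_neg hs.le ((N : ℝ) / 2)]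
  field_simp

lemma heatFlow_rpow_le_of_ulocNorm_le (N : ℕ) {m : ℝ} (hm : 0 < m) (hr : r ≠ 1)
    (hmr : 1 < ENNReal.ofReal m * r) : ∃ C : ℝ, 0 < C ∧
    ∀ (f : Euc N → ℝ) (a ε δ : ℝ), Measurable f → (∀ x, 0 ≤ f x) → 0 < ε → 0 < δ →
      ulocNorm N r √δ f ≤ ENNReal.ofReal (ε * δ ^ (-(m * a - (N : ℝ) / 2 * r⁻¹.toReal))) →
      ∀ s : ℝ, 0 < s → s ≤ δ → ∀ x, heatFlow N s (fun y => ENNReal.ofReal (f y ^ (1 / m))) x ≤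
        ENNReal.ofReal (C * ε ^ (1 / m) * δ ^ (-a) *
          (s / δ) ^ (-((N : ℝ) / 2 * r⁻¹.toReal / m))) := by
  obtain ⟨C, hC, hflow⟩ := heatFlow_le_of_ulocNorm_le N hmr
  refine ⟨C, hC, fun f a ε δ hf hf0 hε hδ hfε s hs hsδ x => ?_⟩
  have hroot := (ulocNorm_rpow_le hm hr hmr.ne' hf0 √δ).trans
    (ENNReal.rpow_le_rpow hfε (by positivity : 0 ≤ 1 / m))
  rw [ENNReal.ofReal_rpow_of_pos (by positivity)] at hroot
  refine (hflow _ _ δ (hf.pow_const _) (fun y => Real.rpow_nonneg (hf0 y) _) (by positivity) hroot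
    s hs hsδ x).trans_eq (congrArg _ ?_)
  have hδ' : (ε * δ ^ (-(m * a - (N : ℝ) / 2 * r⁻¹.toReal))) ^ (1 / m) =
      ε ^ (1 / m) * (δ ^ (-a) * δ ^ ((N : ℝ) / 2 * r⁻¹.toReal / m)) := by
    rw [Real.mul_rpow hε.le (by positivity), ← Real.rpow_mul hδ.le, ← Real.rpow_add hδ]
    congr 2
    field_simp
    ring
  have hinv : (N : ℝ) / 2 * (ENNReal.ofReal m * r)⁻¹.toReal = (N : ℝ) / 2 * r⁻¹.toReal / m := by
    rw [ENNReal.toReal_inv, ENNReal.toReal_mul, ENNReal.toReal_ofReal hm.le, ENNReal.toReal_inv]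
    field_simp
  rw [hδ', hinv, Real.div_rpow hs.le hδ.le, Real.rpow_neg hδ.le (_ / m)]
  field_simp

end UniformlyLocalNorm

section Duhamel

/-- The Duhamel term `∫ₐᵗ S(t-s)F(s) ds` of a source `F` switched on at time `a`. -/
def duhamel (N : ℕ) (F : Euc N → ℝ → ℝ≥0∞) (a t : ℝ) (x : Euc N) : ℝ≥0∞ :=
  ∫⁻ s in Set.Ioo a t, heatFlow N (t - s) (F · s) x

variable {N : ℕ} {F : Euc N → ℝ → ℝ≥0∞} {a t₀ t : ℝ}

lemma heatFlow_duhamel (hF : Measurable (Function.uncurry F)) (ht : t₀ < t) (x : Euc N) :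
    heatFlow N (t - t₀) (duhamel N F a t₀) x =
      ∫⁻ s in Set.Ioo a t₀, heatFlow N (t - s) (F · s) x := by
  have hflow : Measurable fun b : Euc N × ℝ => heatFlow N (t₀ - b.2) (F · b.2) b.1 :=
    (measurable_heatFlow_sub hF).comp
      (by fun_prop : Measurable fun b : Euc N × ℝ => ((b.1, t₀), b.2))
  calc heatFlow N (t - t₀) (duhamel N F a t₀) x
      = ∫⁻ y, ∫⁻ s in Set.Ioo a t₀,
          heatFlow N (t₀ - s) (F · s) y * heatKernel N (t - t₀) (x - y) :=
        lintegral_congr fun y => (lintegral_mul_const' _ _ (heatKernel_ne_top _ _)).symm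
    _ = ∫⁻ s in Set.Ioo a t₀, heatFlow N (t - t₀) (heatFlow N (t₀ - s) (F · s)) x :=
        lintegral_lintegral_swap (hflow.mul
          ((measurable_heatKernel_const_sub _ x).comp measurable_fst)).aemeasurable
    _ = ∫⁻ s in Set.Ioo a t₀, heatFlow N (t - s) (F · s) x :=
        setLIntegral_congr_fun measurableSet_Ioo fun s hs => by
          rw [heatFlow_heatFlow (sub_pos.2 ht) (sub_pos.2 hs.2) hF.of_uncurry_right,
            sub_add_sub_cancel]

lemma duhamel_eq_add (hF : Measurable (Function.uncurry F)) (ha : a < t₀) (ht : t₀ < t)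
    (x : Euc N) : duhamel N F a t x =
      heatFlow N (t - t₀) (duhamel N F a t₀) x + duhamel N F t₀ t x := by
  have hsplit : Set.Ioc a t₀ ∪ Set.Ioo t₀ t = Set.Ioo a t := Set.Ioc_union_Ioo_eq_Ioo ha.le ht
  rw [heatFlow_duhamel hF ht, duhamel, ← hsplit,
    lintegral_union measurableSet_Ioo (Set.disjoint_left.2 fun s hs hs' => hs'.1.not_ge hs.2),
    ← setLIntegral_congr (Ioo_ae_eq_Ioc (a := a)), duhamel]

lemma heatFlow_add_duhamel_restart {φ : Euc N → ℝ≥0∞} (hφ : Measurable φ)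
    (hF : Measurable (Function.uncurry F)) (ha : a < t₀) (ht : t₀ < t) (x : Euc N) :
    heatFlow N (t - a) φ x + duhamel N F a t x =
      heatFlow N (t - t₀) (fun y => heatFlow N (t₀ - a) φ y + duhamel N F a t₀ y) x +
        duhamel N F t₀ t x := by
  rw [heatFlow_add (measurable_heatFlow hφ _), heatFlow_heatFlow (sub_pos.2 ht) (sub_pos.2 ha) hφ,
    sub_add_sub_cancel, duhamel_eq_add hF ha ht, add_assoc]

lemma lintegral_Ioo_le_of_le_mul_of_le {h : ℝ} {G k : ℝ → ℝ≥0∞} {A B : ℝ≥0∞} (hk : Measurable k)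
    (hearly : ∀ s ∈ Set.Ioo a t, s ≤ t - h → G s ≤ k s * A)
    (hlate : ∀ s ∈ Set.Ioo a t, t - h < s → G s ≤ B)
    (hkint : ∫⁻ s in Set.Ioo a t, k s ≤ 1 / 2) (hB : ENNReal.ofReal h * B ≤ A / 2) :
    ∫⁻ s in Set.Ioo a t, G s ≤ A := by
  calc ∫⁻ s in Set.Ioo a t, G s
      ≤ ∫⁻ s in Set.Ioo a t, (k s * A + (Set.Ioo (t - h) t).indicator (fun _ => B) s) := by
        refine setLIntegral_mono ((hk.mul_const A).add
          (measurable_const.indicator measurableSet_Ioo)) fun s hs => ?_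
        obtain hsh | hsh := le_or_gt s (t - h)
        · exact (hearly s hs hsh).trans le_self_add
        · rw [Set.indicator_of_mem (Set.mem_Ioo.2 ⟨hsh, hs.2⟩)]
          exact (hlate s hs hsh).trans le_add_self
    _ ≤ (∫⁻ s in Set.Ioo a t, k s) * A + ∫⁻ _ in Set.Ioo (t - h) t, B := by
        rw [lintegral_add_left (hk.mul_const A), lintegral_mul_const _ hk,
          ← lintegral_indicator measurableSet_Ioo (fun _ => B)]
        gcongr
        exact Measure.restrict_le_self
    _ ≤ 1 / 2 * A + A / 2 := by
        rw [setLIntegral_const, Real.volume_Ioo, _root_.sub_sub_cancel, mul_comm B]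
        gcongr
    _ = A := by rw [one_div, mul_comm, ← div_eq_mul_inv, ENNReal.add_halves]

end Duhamel

section Solutions

variable {N : ℕ} {p q : ℝ} {u₀ v₀ : Euc N → ℝ} {u v : Euc N → ℝ → ℝ} {t₀ t : ℝ}

lemma LocBdd.exists_forall_mem_Icc_le {T a b : ℝ} (hu : LocBdd N (ENNReal.ofReal T) u)
    (ha : 0 < a) (hab : a ≤ b) (hb : b < T) :
    ∃ M : NNReal, ∀ t ∈ Set.Icc a b, ∀ᵐ x, ENNReal.ofReal (u x t) ≤ M := by
  have hT : 0 < T := ha.trans (hab.trans_lt hb)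
  set τ := min a (T - b) / 2
  have hτ : 0 < τ := half_pos (lt_min ha (sub_pos.2 hb))
  have hτa : 2 * τ ≤ a := (mul_div_cancel₀ _ two_ne_zero).trans_le (min_le_left _ _)
  have hτb : 2 * τ ≤ T - b := (mul_div_cancel₀ _ two_ne_zero).trans_le (min_le_right _ _)
  obtain ⟨M, hM⟩ := hu τ hτ ((ENNReal.ofReal_lt_ofReal_iff hT).2 (by linarith))
  refine ⟨M.toNNReal, fun t ht => ?_⟩
  filter_upwards [hM t (by linarith [ht.1]) (ENNReal.ofReal_le_ofReal (by linarith [ht.2]))]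
    with x hx
  exact ENNReal.ofReal_le_ofReal ((le_abs_self _).trans hx)

lemma IsSolSys.symm {T : ℝ≥0∞} (h : IsSolSys N p q u₀ v₀ T u v) : IsSolSys N q p v₀ u₀ T v u := by
  obtain ⟨⟨hu, hv, hum, hvm, hub, hvb⟩, hduhamel⟩ := h
  exact ⟨⟨hv, hu, hvm, hum, hvb, hub⟩, fun t ht htT => (hduhamel t ht htT).symm⟩

lemma IsSolSys.ofReal_eq {T : ℝ≥0∞} (h : IsSolSys N p q u₀ v₀ T u v) (hp : 0 ≤ p) (ht : 0 < t)
    (htT : ENNReal.ofReal t < T) : ∀ᵐ x, ENNReal.ofReal (u x t) =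
      heatFlow N t (fun y => ENNReal.ofReal (u₀ y)) x +
        duhamel N (fun y s => ENNReal.ofReal (v y s) ^ p) 0 t x := by
  filter_upwards [(h.2 t ht htT).1] with x hx
  rw [hx, heatS_eq_heatFlow ht]
  congr 1
  refine setLIntegral_congr_fun measurableSet_Ioo fun s hs => ?_
  simp only [heatS_eq_heatFlow (sub_pos.2 hs.2), ENNReal.ofReal_rpow_of_nonneg (h.1.2.1 _ s) hp]

lemma IsSolSys.restart {T : ℝ≥0∞} (h : IsSolSys N p q u₀ v₀ T u v) (hp : 0 ≤ p)
    (hu₀ : Measurable u₀) (ht₀ : 0 < t₀) (ht : t₀ < t) (htT : ENNReal.ofReal t < T) :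
    ∀ᵐ x, ENNReal.ofReal (u x t) = heatFlow N (t - t₀) (fun y => ENNReal.ofReal (u y t₀)) x +
      duhamel N (fun y s => ENNReal.ofReal (v y s) ^ p) t₀ t x := by
  have hsource : Measurable (Function.uncurry fun y s => ENNReal.ofReal (v y s) ^ p) :=
    h.1.2.2.2.1.ennreal_ofReal.pow_const p
  have ht₀T : ENNReal.ofReal t₀ < T := (ENNReal.ofReal_le_ofReal ht.le).trans_lt htT
  filter_upwards [h.ofReal_eq hp (ht₀.trans ht) htT] with x hx
  rw [hx, heatFlow_congr_ae (h.ofReal_eq hp ht₀ ht₀T)]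
  simpa only [sub_zero] using
    heatFlow_add_duhamel_restart hu₀.ennreal_ofReal hsource ht₀ ht x

end Solutions

section Comparison

variable {N : ℕ} {w : Euc N → ℝ≥0∞} {α β κ p q : ℝ}

lemma forall_gt_of_forall_le_sub {P : ℝ → Prop} {a h : ℝ} (hh : 0 < h)
    (hstep : ∀ t, a < t → (∀ s, a < s → s ≤ t - h → P s) → P t) {t : ℝ} (ht : a < t) : P t := by
  have hind : ∀ n : ℕ, ∀ t, a < t → t < a + n * h → P t := by
    intro n
    induction n with
    | zero => exact fun t hat hta => absurd (hat.trans hta) (by simp)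
    | succ n ih =>
      refine fun t hat hta => hstep t hat fun s has hst => ih s has ?_
      push_cast at hta
      linarith
  obtain ⟨n, hn⟩ := exists_nat_gt ((t - a) / h)
  exact hind n t ht (by linarith [(div_lt_iff₀ hh).1 hn])

lemma exists_pos_ofReal_mul_le {a b c e : ℝ≥0∞} (ha : a ≠ ∞) (hb : b ≠ ∞) (hc : c ≠ 0)
    (he : e ≠ 0) : ∃ h : ℝ, 0 < h ∧ ENNReal.ofReal h * a ≤ c ∧ ENNReal.ofReal h * b ≤ e := by
  obtain ⟨h, hh, hlt⟩ := ENNReal.exists_nnreal_pos_mul_lt (ENNReal.add_ne_top.2 ⟨ha, hb⟩)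
    (b := min c e) (by simp [hc, he])
  rw [mul_add] at hlt
  refine ⟨h, hh, ?_, ?_⟩ <;> rw [ENNReal.ofReal_coe_nnreal]
  exacts [(le_self_add.trans hlt.le).trans (min_le_left c e),
    (le_add_self.trans hlt.le).trans (min_le_right c e)]

/-- The exponents of the substitution `u = U^β`, `v = V^α`, which makes the scaling of `U` and `V`
the same as that of `∂ₜW = ΔW + W^(1 + κ)`. They are normalised by `max α β = 1`, so that
both powers are concave. -/
structure BarrierExponents (p q α β κ : ℝ) : Prop where
  alpha_pos : 0 < α
  beta_pos : 0 < β
  max_eq_one : max α β = 1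
  kappa_pos : 0 < κ
  alpha_mul : α * p = κ + β
  beta_mul : β * q = κ + α

namespace BarrierExponents

lemma symm (h : BarrierExponents p q α β κ) : BarrierExponents q p β α κ :=
  ⟨h.beta_pos, h.alpha_pos, max_comm α β ▸ h.max_eq_one, h.kappa_pos, h.beta_mul, h.alpha_mul⟩

lemma beta_le_one (h : BarrierExponents p q α β κ) : β ≤ 1 :=
  (le_max_right α β).trans_eq h.max_eq_one

lemma left_pos (h : BarrierExponents p q α β κ) : 0 < p :=
  pos_of_mul_pos_right (h.alpha_mul ▸ add_pos h.kappa_pos h.beta_pos) h.alpha_pos.le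

lemma beta_mul_div (h : BarrierExponents p q α β κ) : β * ((p * q - 1) / (p + 1)) = κ := by
  have hp1 : p + 1 ≠ 0 := by linarith [h.left_pos]
  rw [mul_div_assoc', div_eq_iff hp1]
  linear_combination p * h.beta_mul + h.alpha_mul

end BarrierExponents

lemma exists_barrierExponents (hp : 0 ≤ p) (hq : 0 ≤ q) (hpq : 1 < p * q) :
    ∃ α β κ, BarrierExponents p q α β κ := by
  have hM : 0 < max p q + 1 := by positivity
  refine ⟨(q + 1) / (max p q + 1), (p + 1) / (max p q + 1), (p * q - 1) / (max p q + 1),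
    by positivity, by positivity, ?_, div_pos (sub_pos.2 hpq) hM, by ring, by ring⟩
  rw [max_div_div_right hM.le, max_add_add_right, max_comm, div_self hM.ne']

-- Splitting `αp = κ + β`, the factor `(S(σ)w)^κ` is estimated uniformly and `(S(σ)w)^β` is carried
-- along by concavity of `x ↦ x^β`.
lemma heatFlow_rpow_le_of_le_two_mul_rpow (hw : Measurable w) {z : ℝ≥0∞} {τ σ : ℝ} (hτ : 0 < τ)
    (hσ : 0 < σ) (he : BarrierExponents p q α β κ) {V : Euc N → ℝ≥0∞}
    (hV : ∀ᵐ y, V y ≤ 2 * heatFlow N σ w y ^ α)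
    (hz : ∀ y, heatFlow N σ w y ≤ z) (hz' : z ≠ ∞) (x : Euc N) :
    heatFlow N τ (fun y => V y ^ p) x ≤ 2 ^ p * z ^ κ * heatFlow N (τ + σ) w x ^ β := by
  have hp := he.left_pos.le
  have hκ := he.kappa_pos.le
  have hpow : ∀ᵐ y, V y ^ p ≤ 2 ^ p * z ^ κ * heatFlow N σ w y ^ β := by
    filter_upwards [hV] with y hy
    calc V y ^ p ≤ (2 * heatFlow N σ w y ^ α) ^ p := by gcongr
      _ = 2 ^ p * (heatFlow N σ w y ^ κ * heatFlow N σ w y ^ β) := by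
          rw [ENNReal.mul_rpow_of_nonneg _ _ hp, ← ENNReal.rpow_mul, he.alpha_mul,
            ENNReal.rpow_add_of_nonneg _ _ he.kappa_pos.le he.beta_pos.le]
      _ ≤ 2 ^ p * z ^ κ * heatFlow N σ w y ^ β := by
          rw [mul_assoc]
          gcongr
          exact hz y
  have hconst : 2 ^ p * z ^ κ ≠ ∞ := ENNReal.mul_ne_top
    (ENNReal.rpow_ne_top_of_nonneg hp (by simp)) (ENNReal.rpow_ne_top_of_nonneg hκ hz')
  calc heatFlow N τ (fun y => V y ^ p) x
      ≤ heatFlow N τ (fun y => 2 ^ p * z ^ κ * heatFlow N σ w y ^ β) x := heatFlow_mono_ae hpow x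
    _ = 2 ^ p * z ^ κ * heatFlow N τ (fun y => heatFlow N σ w y ^ β) x :=
        heatFlow_const_mul hconst x
    _ ≤ 2 ^ p * z ^ κ * heatFlow N (τ + σ) w x ^ β := by
        rw [← heatFlow_heatFlow hτ hσ hw]
        gcongr
        exact heatFlow_rpow_le hτ he.beta_pos he.beta_le_one (measurable_heatFlow hw σ) x

/-- `w` and `z` define a barrier `(2 (S(t - t₀)w)^β, 2 (S(t - t₀)w)^α)` on `(t₀, T)` for the
values `f`, `g` at time `t₀`: `w` dominates these values and is bounded away from zero, and `z`
controls `S(t - t₀)w` uniformly in space and has a small integral in time. -/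
structure IsBarrier (N : ℕ) (p q α β κ t₀ T : ℝ) (f g w : Euc N → ℝ≥0∞) (z : ℝ → ℝ≥0∞) :
    Prop where
  measurable_w : Measurable w
  exists_pos_le : ∃ d, 0 < d ∧ ∀ y, d ≤ w y
  le_rpow_beta : ∀ y, f y ≤ w y ^ β
  le_rpow_alpha : ∀ y, g y ≤ w y ^ α
  measurable_z : Measurable z
  ne_top : ∀ s, z s ≠ ∞
  heatFlow_le : ∀ s ∈ Set.Ioo t₀ T, ∀ y, heatFlow N (s - t₀) w y ≤ z s
  lintegral_le : ∫⁻ s in Set.Ioo t₀ T, (2 ^ p + 2 ^ q) * z s ^ κ ≤ 1 / 2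

namespace IsBarrier

variable {t₀ T : ℝ} {f g : Euc N → ℝ≥0∞} {z : ℝ → ℝ≥0∞}

lemma symm (hb : IsBarrier N p q α β κ t₀ T f g w z) : IsBarrier N q p β α κ t₀ T g f w z where
  __ := hb
  le_rpow_beta := hb.le_rpow_alpha
  le_rpow_alpha := hb.le_rpow_beta
  lintegral_le := add_comm ((2 : ℝ≥0∞) ^ p) (2 ^ q) ▸ hb.lintegral_le

lemma heatFlow_add_duhamel_le (hb : IsBarrier N p q α β κ t₀ T f g w z)
    (he : BarrierExponents p q α β κ) {t h : ℝ} (ht : t ∈ Set.Ioo t₀ T) {d M : ℝ≥0∞}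
    (hd : ∀ y, d ≤ w y) (hM : ENNReal.ofReal h * M ^ p ≤ d ^ β / 2) {V : Euc N → ℝ → ℝ≥0∞}
    (hVM : ∀ s ∈ Set.Ioo t₀ t, ∀ᵐ y, V y s ≤ M)
    (hV : ∀ s ∈ Set.Ioo t₀ t, s ≤ t - h → ∀ᵐ y, V y s ≤ 2 * heatFlow N (s - t₀) w y ^ α)
    (x : Euc N) :
    heatFlow N (t - t₀) f x + duhamel N (fun y s => V y s ^ p) t₀ t x ≤
      2 * heatFlow N (t - t₀) w x ^ β := by
  have ht' : 0 < t - t₀ := sub_pos.2 ht.1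
  have hIoo : Set.Ioo t₀ t ⊆ Set.Ioo t₀ T := Set.Ioo_subset_Ioo_right ht.2.le
  have hdw : d ≤ heatFlow N (t - t₀) w x :=
    (heatFlow_const ht' d x).symm.trans_le (heatFlow_mono_ae (.of_forall hd) x)
  have hdata : heatFlow N (t - t₀) f x ≤ heatFlow N (t - t₀) w x ^ β :=
    (heatFlow_mono_ae (.of_forall hb.le_rpow_beta) x).trans
      (heatFlow_rpow_le ht' he.beta_pos he.beta_le_one hb.measurable_w x)
  have hzint : ∫⁻ s in Set.Ioo t₀ t, 2 ^ p * z s ^ κ ≤ 1 / 2 :=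
    (lintegral_mono' (Measure.restrict_mono_set _ hIoo) fun s =>
      mul_le_mul_left le_self_add (z s ^ κ)).trans hb.lintegral_le
  have hsource : duhamel N (fun y s => V y s ^ p) t₀ t x ≤ heatFlow N (t - t₀) w x ^ β := by
    refine lintegral_Ioo_le_of_le_mul_of_le (h := h) (B := M ^ p)
      ((hb.measurable_z.pow_const κ).const_mul (2 ^ p)) (fun s hs hsh => ?_) (fun s hs _ => ?_)
      hzint ?_
    · have hearly := heatFlow_rpow_le_of_le_two_mul_rpow hb.measurable_w (sub_pos.2 hs.2)
        (sub_pos.2 hs.1) he (hV s hs hsh) (hb.heatFlow_le s (hIoo hs)) (hb.ne_top s) x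
      rwa [sub_add_sub_cancel] at hearly
    · refine (heatFlow_mono_ae (ψ := fun _ => M ^ p) ?_ x).trans_eq
        (heatFlow_const (sub_pos.2 hs.2) _ x)
      filter_upwards [hVM s hs] with y hy
      exact ENNReal.rpow_le_rpow hy he.left_pos.le
    · exact hM.trans (by have := he.beta_pos.le; gcongr)
  rw [two_mul]
  exact add_le_add hdata hsource

end IsBarrier

-- On `[t₀, t₁]` the solution is bounded and the barrier is bounded below, so the newest part
-- `(t - h, t)` of the Duhamel integral is harmless and the bounds propagate in steps of length `h`.
theorem IsSolSys.le_two_mul_heatFlow_rpow {T t₀ : ℝ} {u₀ v₀ : Euc N → ℝ} {u v : Euc N → ℝ → ℝ}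
    (hsol : IsSolSys N p q u₀ v₀ (ENNReal.ofReal T) u v) (hu₀ : Measurable u₀)
    (hv₀ : Measurable v₀) (he : BarrierExponents p q α β κ) (ht₀ : 0 < t₀) {z : ℝ → ℝ≥0∞}
    (hb : IsBarrier N p q α β κ t₀ T (fun x => ENNReal.ofReal (u x t₀))
      (fun x => ENNReal.ofReal (v x t₀)) w z) {t₁ : ℝ} (ht₁ : t₁ ∈ Set.Ioo t₀ T) :
    (∀ᵐ x, ENNReal.ofReal (u x t₁) ≤ 2 * heatFlow N (t₁ - t₀) w x ^ β) ∧
      ∀ᵐ x, ENNReal.ofReal (v x t₁) ≤ 2 * heatFlow N (t₁ - t₀) w x ^ α := by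
  obtain ⟨A, hA⟩ := hsol.1.2.2.2.2.1.exists_forall_mem_Icc_le ht₀ ht₁.1.le ht₁.2
  obtain ⟨B, hB⟩ := hsol.1.2.2.2.2.2.exists_forall_mem_Icc_le ht₀ ht₁.1.le ht₁.2
  obtain ⟨d, hd0, hd⟩ := hb.exists_pos_le
  obtain ⟨h, hh, hhA, hhB⟩ : ∃ h : ℝ, 0 < h ∧ ENNReal.ofReal h * (A : ℝ≥0∞) ^ q ≤ d ^ α / 2 ∧
      ENNReal.ofReal h * (B : ℝ≥0∞) ^ p ≤ d ^ β / 2 :=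
    exists_pos_ofReal_mul_le (ENNReal.rpow_ne_top_of_nonneg he.symm.left_pos.le ENNReal.coe_ne_top)
      (ENNReal.rpow_ne_top_of_nonneg he.left_pos.le ENNReal.coe_ne_top)
      (by simp [hd0.ne', he.alpha_pos.le]) (by simp [hd0.ne', he.beta_pos.le])
  refine forall_gt_of_forall_le_sub (P := fun t => t ≤ t₁ →
    (∀ᵐ x, ENNReal.ofReal (u x t) ≤ 2 * heatFlow N (t - t₀) w x ^ β) ∧
      ∀ᵐ x, ENNReal.ofReal (v x t) ≤ 2 * heatFlow N (t - t₀) w x ^ α)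
    hh (fun t ht ih htt₁ => ?_) ht₁.1 le_rfl
  have hIcc : ∀ s ∈ Set.Ioo t₀ t, s ∈ Set.Icc t₀ t₁ := fun s hs => ⟨hs.1.le, hs.2.le.trans htt₁⟩
  have htT : t < T := htt₁.trans_lt ht₁.2
  have htT' := (ENNReal.ofReal_lt_ofReal_iff (ht₀.trans (ht.trans htT))).2 htT
  constructor
  · filter_upwards [hsol.restart he.left_pos.le hu₀ ht₀ ht htT'] with x hx
    rw [hx]
    exact hb.heatFlow_add_duhamel_le he ⟨ht, htT⟩ hd hhB (fun s hs => hB s (hIcc s hs))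
      (fun s hs hsh => (ih s hs.1 hsh (hIcc s hs).2).2) x
  · filter_upwards [hsol.symm.restart he.symm.left_pos.le hv₀ ht₀ ht htT'] with x hx
    rw [hx]
    exact hb.symm.heatFlow_add_duhamel_le he.symm ⟨ht, htT⟩ hd hhA (fun s hs => hA s (hIcc s hs))
      (fun s hs hsh => (ih s hs.1 hsh (hIcc s hs).2).1) x

end Comparison

section BlowUpRate

variable {N : ℕ} {p q α β κ : ℝ}

lemma lintegral_Ioo_ofReal_div_rpow {b t₀ T : ℝ} (hb : b < 1) (hT : t₀ < T) :
    ∫⁻ s in Set.Ioo t₀ T, ENNReal.ofReal (((s - t₀) / (T - t₀)) ^ (-b)) =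
      ENNReal.ofReal ((T - t₀) / (1 - b)) := by
  have hδ : 0 < T - t₀ := sub_pos.2 hT
  have hint : IntervalIntegrable (fun s => ((s - t₀) / (T - t₀)) ^ (-b)) volume t₀ T := by
    have hpow : IntervalIntegrable (fun s : ℝ => s ^ (-b)) volume 0 1 :=
      intervalIntegral.intervalIntegrable_rpow' (by linarith)
    have hscaled := (hpow.comp_mul_right (c := (T - t₀)⁻¹) (by simp)).comp_sub_right t₀
    simpa [div_eq_mul_inv] using hscaled
  rw [setLIntegral_congr Ioo_ae_eq_Ioc, ← ofReal_integral_eq_lintegral_ofReal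
    ((intervalIntegrable_iff_integrableOn_Ioc_of_le hT.le).1 hint)]
  · rw [← intervalIntegral.integral_of_le hT.le,
      intervalIntegral.integral_comp_sub_right (fun s => (s / (T - t₀)) ^ (-b)),
      intervalIntegral.integral_comp_div (fun s => s ^ (-b)) hδ.ne',
      integral_rpow (.inl (by linarith)), neg_add_eq_sub, sub_self, zero_div, div_self hδ.ne',
      Real.one_rpow, Real.zero_rpow (sub_pos.2 hb).ne', sub_zero, smul_eq_mul, mul_one_div]
  · filter_upwards [ae_restrict_mem measurableSet_Ioc] with s hs
    have := sub_nonneg.2 hs.1.le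
    simp only [Pi.zero_apply]
    positivity

lemma lintegral_Ioo_ofReal_rpow {θ η t₀ T : ℝ} (hκ : 0 < κ) (hθ : θ * κ < 1) (hη : 0 ≤ η)
    (hT : t₀ < T) :
    ∫⁻ s in Set.Ioo t₀ T,
        ENNReal.ofReal (η * (T - t₀) ^ (-(1 / κ)) * ((s - t₀) / (T - t₀)) ^ (-θ)) ^ κ =
      ENNReal.ofReal (η ^ κ / (1 - θ * κ)) := by
  have hδ : 0 < T - t₀ := sub_pos.2 hT
  have hpow : ∀ s ∈ Set.Ioo t₀ T,
      ENNReal.ofReal (η * (T - t₀) ^ (-(1 / κ)) * ((s - t₀) / (T - t₀)) ^ (-θ)) ^ κ =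
        ENNReal.ofReal (η ^ κ * (T - t₀)⁻¹) *
          ENNReal.ofReal (((s - t₀) / (T - t₀)) ^ (-(θ * κ))) := fun s hs => by
    have hs0 : 0 < s - t₀ := sub_pos.2 hs.1
    rw [ENNReal.ofReal_rpow_of_nonneg (by positivity) hκ.le, ← ENNReal.ofReal_mul (by positivity),
      Real.mul_rpow (by positivity) (by positivity), Real.mul_rpow hη (by positivity),
      ← Real.rpow_mul hδ.le, ← Real.rpow_mul (by positivity), neg_mul, neg_mul,
      one_div_mul_cancel hκ.ne', Real.rpow_neg_one]
  rw [setLIntegral_congr_fun measurableSet_Ioo hpow,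
    lintegral_const_mul' _ _ ENNReal.ofReal_ne_top, lintegral_Ioo_ofReal_div_rpow hθ hT,
    ← ENNReal.ofReal_mul (by positivity)]
  congr 1
  field_simp

lemma exists_pos_mul_add_rpow_le {a b : ℝ} (ha : 0 < a) (hb : 0 < b) (hκ : 0 < κ) (K C₁ C₂ : ℝ)
    {c : ℝ} (hc : 0 < c) :
    ∃ ε : ℝ, 0 < ε ∧ K * (C₁ * ε ^ a + C₂ * ε ^ b + ε) ^ κ ≤ c := by
  have hcont : Continuous fun ε : ℝ => K * (C₁ * ε ^ a + C₂ * ε ^ b + ε) ^ κ :=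
    (((((Real.continuous_rpow_const ha.le).const_mul C₁).add
      ((Real.continuous_rpow_const hb.le).const_mul C₂)).add continuous_id).rpow_const
        fun _ => .inr hκ.le).const_mul K
  have hlim := hcont.tendsto' 0 0 (by simp [ha.ne', hb.ne', hκ.ne'])
  obtain ⟨ε, hε, hεc⟩ := (((hlim.mono_left nhdsWithin_le_nhds).eventually_le_const hc).and
    (self_mem_nhdsWithin (s := Set.Ioi 0))).exists
  exact ⟨ε, hεc, hε⟩

lemma heatFlow_add_add_const_le {F G : Euc N → ℝ≥0∞} (hF : Measurable F) (hG : Measurable G)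
    {A B D ε θ₁ θ₂ σ δ : ℝ} (hA : 0 ≤ A) (hB : 0 ≤ B) (hD : 0 ≤ D) (hε : 0 ≤ ε) (hθ₁ : 0 ≤ θ₁)
    (hσ : 0 < σ) (hσδ : σ ≤ δ) {x : Euc N}
    (hFle : heatFlow N σ F x ≤ ENNReal.ofReal (A * D * (σ / δ) ^ (-θ₁)))
    (hGle : heatFlow N σ G x ≤ ENNReal.ofReal (B * D * (σ / δ) ^ (-θ₂))) :
    heatFlow N σ (fun y => F y + G y + ENNReal.ofReal (ε * D)) x ≤
      ENNReal.ofReal ((A + B + ε) * D * (σ / δ) ^ (-max θ₁ θ₂)) := by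
  have hδ : 0 < δ := hσ.trans_le hσδ
  have hratio : 0 < σ / δ := div_pos hσ hδ
  have hratio1 : σ / δ ≤ 1 := (div_le_one hδ).2 hσδ
  have hone : 1 ≤ (σ / δ) ^ (-max θ₁ θ₂) :=
    Real.one_le_rpow_of_pos_of_le_one_of_nonpos hratio hratio1 (by simp [hθ₁])
  calc heatFlow N σ (fun y => F y + G y + ENNReal.ofReal (ε * D)) x
      = heatFlow N σ F x + heatFlow N σ G x + ENNReal.ofReal (ε * D) := by
        rw [heatFlow_add (φ := fun y => F y + G y) (hF.add hG), heatFlow_add hF, heatFlow_const hσ]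
    _ ≤ ENNReal.ofReal (A * D * (σ / δ) ^ (-max θ₁ θ₂)) +
        ENNReal.ofReal (B * D * (σ / δ) ^ (-max θ₁ θ₂)) +
          ENNReal.ofReal (ε * D * (σ / δ) ^ (-max θ₁ θ₂)) := by
        gcongr ?_ + ?_ + ENNReal.ofReal ?_
        · exact hFle.trans (by gcongr ENNReal.ofReal (_ * ?_); exact
            Real.rpow_le_rpow_of_exponent_ge hratio hratio1 (by simp))
        · exact hGle.trans (by gcongr ENNReal.ofReal (_ * ?_); exact
            Real.rpow_le_rpow_of_exponent_ge hratio hratio1 (by simp))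
        · exact le_mul_of_one_le_right (by positivity) hone
    _ = ENNReal.ofReal ((A + B + ε) * D * (σ / δ) ^ (-max θ₁ θ₂)) := by
        rw [← ENNReal.ofReal_add (by positivity) (by positivity),
          ← ENNReal.ofReal_add (by positivity) (by positivity)]
        ring_nf

lemma ofReal_rpow_one_div_rpow {m x : ℝ} (hm : 0 < m) (hx : 0 ≤ x) :
    ENNReal.ofReal (x ^ (1 / m)) ^ m = ENNReal.ofReal x := by
  rw [ENNReal.ofReal_rpow_of_nonneg (by positivity) hm.le, one_div, Real.rpow_inv_rpow hx hm.ne']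

-- The constant `ε (T - t₀)^(-1/κ)` keeps the barrier away from zero.
lemma isBarrier_of_heatFlow_rpow_le (he : BarrierExponents p q α β κ) {A B ε θ₁ θ₂ t₀ T : ℝ}
    (hA : 0 ≤ A) (hB : 0 ≤ B) (hε : 0 < ε) (hθ₁ : 0 ≤ θ₁) (hθ : max θ₁ θ₂ * κ < 1)
    (hsmall : (2 ^ p + 2 ^ q) / (1 - max θ₁ θ₂ * κ) * (A + B + ε) ^ κ ≤ 1 / 2) (hT : t₀ < T)
    {f g : Euc N → ℝ} (hf : Measurable f) (hg : Measurable g) (hf0 : ∀ x, 0 ≤ f x)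
    (hg0 : ∀ x, 0 ≤ g x)
    (hfle : ∀ σ, 0 < σ → σ ≤ T - t₀ → ∀ x,
      heatFlow N σ (fun y => ENNReal.ofReal (f y ^ (1 / β))) x ≤
        ENNReal.ofReal (A * (T - t₀) ^ (-(1 / κ)) * (σ / (T - t₀)) ^ (-θ₁)))
    (hgle : ∀ σ, 0 < σ → σ ≤ T - t₀ → ∀ x,
      heatFlow N σ (fun y => ENNReal.ofReal (g y ^ (1 / α))) x ≤
        ENNReal.ofReal (B * (T - t₀) ^ (-(1 / κ)) * (σ / (T - t₀)) ^ (-θ₂))) :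
    IsBarrier N p q α β κ t₀ T (fun x => ENNReal.ofReal (f x)) (fun x => ENNReal.ofReal (g x))
      (fun y => ENNReal.ofReal (f y ^ (1 / β)) + ENNReal.ofReal (g y ^ (1 / α)) +
        ENNReal.ofReal (ε * (T - t₀) ^ (-(1 / κ))))
      fun s => ENNReal.ofReal ((A + B + ε) * (T - t₀) ^ (-(1 / κ)) *
        ((s - t₀) / (T - t₀)) ^ (-max θ₁ θ₂)) where
  measurable_w := by fun_prop
  exists_pos_le :=
    ⟨_, ENNReal.ofReal_pos.2 (mul_pos hε (Real.rpow_pos_of_pos (sub_pos.2 hT) _)),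
      fun _ => le_add_self⟩
  le_rpow_beta y := by
    rw [← ofReal_rpow_one_div_rpow he.beta_pos (hf0 y)]
    exact ENNReal.rpow_le_rpow (le_self_add.trans le_self_add) he.beta_pos.le
  le_rpow_alpha y := by
    rw [← ofReal_rpow_one_div_rpow he.alpha_pos (hg0 y)]
    exact ENNReal.rpow_le_rpow (le_add_self.trans le_self_add) he.alpha_pos.le
  measurable_z := by fun_prop
  ne_top _ := ENNReal.ofReal_ne_top
  heatFlow_le s hs y := by
    have hs0 : 0 < s - t₀ := sub_pos.2 hs.1
    have hsT : s - t₀ ≤ T - t₀ := sub_le_sub_right hs.2.le t₀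
    exact heatFlow_add_add_const_le (by fun_prop) (by fun_prop) hA hB
      (Real.rpow_nonneg (hs0.le.trans hsT) _) hε.le hθ₁ hs0 hsT (hfle _ hs0 hsT y)
      (hgle _ hs0 hsT y)
  lintegral_le := by
    have htwo : ((2 : ℝ≥0∞) ^ p + 2 ^ q) = ENNReal.ofReal (2 ^ p + 2 ^ q) := by
      rw [ENNReal.ofReal_add (by positivity) (by positivity), ← ENNReal.ofReal_rpow_of_pos two_pos,
        ← ENNReal.ofReal_rpow_of_pos two_pos, ENNReal.ofReal_ofNat]
    rw [htwo, lintegral_const_mul' _ _ ENNReal.ofReal_ne_top,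
      lintegral_Ioo_ofReal_rpow he.kappa_pos hθ (by positivity) hT,
      ← ENNReal.ofReal_mul (by positivity), mul_div_assoc', mul_div_right_comm]
    exact (ENNReal.ofReal_le_ofReal hsmall).trans_eq (by simp)

lemma ne_one_of_one_lt_ofReal_mul {m : ℝ} {r : ℝ≥0∞} (hm : m ≤ 1)
    (hmr : 1 < ENNReal.ofReal m * r) : r ≠ 1 := by
  rintro rfl
  exact hmr.not_ge (by simpa using hm)

lemma exists_isBarrier (he : BarrierExponents p q α β κ) {r₁ r₂ : ℝ≥0∞}
    (hr₁ : 1 < ENNReal.ofReal β * r₁) (hr₂ : 1 < ENNReal.ofReal α * r₂)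
    (hθ₁ : N / 2 * r₁⁻¹.toReal / β * κ < 1) (hθ₂ : N / 2 * r₂⁻¹.toReal / α * κ < 1) :
    ∃ ε : ℝ, 0 < ε ∧ ∀ (t₀ T : ℝ) (f g : Euc N → ℝ), t₀ < T → Measurable f → Measurable g →
      (∀ x, 0 ≤ f x) → (∀ x, 0 ≤ g x) →
      ulocNorm N r₁ √(T - t₀) f ≤
        ENNReal.ofReal (ε * (T - t₀) ^ (-(β * (1 / κ) - N / 2 * r₁⁻¹.toReal))) →
      ulocNorm N r₂ √(T - t₀) g ≤
        ENNReal.ofReal (ε * (T - t₀) ^ (-(α * (1 / κ) - N / 2 * r₂⁻¹.toReal))) →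
      ∃ w z, IsBarrier N p q α β κ t₀ T (fun x => ENNReal.ofReal (f x))
        (fun x => ENNReal.ofReal (g x)) w z ∧ AntitoneOn z (Set.Ioi t₀) := by
  obtain ⟨C₁, hC₁, hf_le⟩ := heatFlow_rpow_le_of_ulocNorm_le N he.beta_pos
    (ne_one_of_one_lt_ofReal_mul he.beta_le_one hr₁) hr₁
  obtain ⟨C₂, hC₂, hg_le⟩ := heatFlow_rpow_le_of_ulocNorm_le N he.alpha_pos
    (ne_one_of_one_lt_ofReal_mul he.symm.beta_le_one hr₂) hr₂
  set θ₁ : ℝ := N / 2 * r₁⁻¹.toReal / β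
  set θ₂ : ℝ := N / 2 * r₂⁻¹.toReal / α
  have hθ : max θ₁ θ₂ * κ < 1 := by
    rw [max_mul_of_nonneg _ _ he.kappa_pos.le]
    exact max_lt hθ₁ hθ₂
  have hθ₁0 : 0 ≤ θ₁ := div_nonneg (by positivity) he.beta_pos.le
  obtain ⟨ε, hε, hεsmall⟩ := exists_pos_mul_add_rpow_le (one_div_pos.2 he.beta_pos)
    (one_div_pos.2 he.alpha_pos) he.kappa_pos ((2 ^ p + 2 ^ q) / (1 - max θ₁ θ₂ * κ)) C₁ C₂
    one_half_pos
  refine ⟨ε, hε, fun t₀ T f g hT hf hg hf0 hg0 hfle hgle => ⟨_, _,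
    isBarrier_of_heatFlow_rpow_le he (by positivity) (by positivity) hε hθ₁0 hθ hεsmall hT hf hg
      hf0 hg0 (hf_le f _ ε _ hf hf0 hε (sub_pos.2 hT) hfle)
      (hg_le g _ ε _ hg hg0 hε (sub_pos.2 hT) hgle), fun s hs t _ hst => ?_⟩⟩
  have hs0 : 0 < s - t₀ := sub_pos.2 hs
  have hT0 : 0 < T - t₀ := sub_pos.2 hT
  refine ENNReal.ofReal_le_ofReal (mul_le_mul_of_nonneg_left ?_ (by positivity))
  exact Real.rpow_le_rpow_of_nonpos (div_pos hs0 hT0) (by gcongr) (by simp [hθ₁0])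

theorem IsSolSys.limsup_ne_top_of_isBarrier {T t₀ : ℝ} {u₀ v₀ : Euc N → ℝ}
    {u v : Euc N → ℝ → ℝ} (hsol : IsSolSys N p q u₀ v₀ (ENNReal.ofReal T) u v)
    (hu₀ : Measurable u₀) (hv₀ : Measurable v₀) (he : BarrierExponents p q α β κ)
    (ht₀ : t₀ ∈ Set.Ioo 0 T) {w : Euc N → ℝ≥0∞} {z : ℝ → ℝ≥0∞}
    (hb : IsBarrier N p q α β κ t₀ T (fun x => ENNReal.ofReal (u x t₀))
      (fun x => ENNReal.ofReal (v x t₀)) w z) (hz : AntitoneOn z (Set.Ioi t₀)) :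
    limsup (fun t : ℝ => essSup (fun x => ENNReal.ofReal (u x t)) (volume : Measure (Euc N)) +
      essSup (fun x => ENNReal.ofReal (v x t)) (volume : Measure (Euc N)))
      (nhdsWithin T (Set.Iio T)) ≠ ∞ := by
  obtain ⟨t₁, ht₁, ht₁T⟩ := exists_between ht₀.2
  have hle : ∀ t ∈ Set.Ioo t₁ T, ∀ x, heatFlow N (t - t₀) w x ≤ z t₁ := fun t ht x =>
    (hb.heatFlow_le t ⟨ht₁.trans ht.1, ht.2⟩ x).trans (hz ht₁ (ht₁.trans ht.1) ht.1.le)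
  refine ne_top_of_le_ne_top (b := 2 * z t₁ ^ β + 2 * z t₁ ^ α) ?_
    (limsup_le_of_le (by isBoundedDefault) ?_)
  · simp [ENNReal.mul_ne_top, hb.ne_top, he.alpha_pos.le, he.beta_pos.le]
  filter_upwards [Ioo_mem_nhdsLT ht₁T] with t ht
  obtain ⟨hu, hv⟩ := hsol.le_two_mul_heatFlow_rpow hu₀ hv₀ he ht₀.1 hb ⟨ht₁.trans ht.1, ht.2⟩
  refine add_le_add (essSup_le_of_ae_le _ ?_) (essSup_le_of_ae_le _ ?_)
  · filter_upwards [hu] with x hx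
    exact hx.trans (mul_le_mul_right (ENNReal.rpow_le_rpow (hle t ht x) he.beta_pos.le) 2)
  · filter_upwards [hv] with x hx
    exact hx.trans (mul_le_mul_right (ENNReal.rpow_le_rpow (hle t ht x) he.alpha_pos.le) 2)

lemma le_ofReal_mul_rpow_neg {δ e ε : ℝ} (hδ : 0 < δ) {X : ℝ≥0∞}
    (h : ENNReal.ofReal (δ ^ e) * X ≤ ENNReal.ofReal ε) : X ≤ ENNReal.ofReal (ε * δ ^ (-e)) := by
  have hpos : 0 < δ ^ e := by positivity
  rw [Real.rpow_neg hδ.le, ← div_eq_mul_inv, ENNReal.ofReal_div_of_pos hpos]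
  exact (ENNReal.le_div_iff_mul_le (.inl (by simpa using hpos)) (.inl ENNReal.ofReal_ne_top)).2
    (mul_comm X _ ▸ h)

lemma toReal_inv_mul_lt_one {r : ℝ≥0∞} {x : ℝ} (hx : 0 < x) (h : ENNReal.ofReal x < r) :
    r⁻¹.toReal * x < 1 := by
  have hinv : r⁻¹ < ENNReal.ofReal x⁻¹ := by
    rwa [ENNReal.ofReal_inv_of_pos hx, ENNReal.inv_lt_inv]
  simpa [hx.ne'] using mul_lt_mul_of_pos_right (ENNReal.toReal_lt_of_lt_ofReal hinv) hx

lemma one_lt_ofReal_mul_of_lt {l s : ℝ} {r : ℝ≥0∞} (hβ : 0 < β) (hs : 1 ≤ l * (β * s))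
    (hr : ENNReal.ofReal (l * s) < r) : 1 < ENNReal.ofReal β * r := by
  calc 1 ≤ ENNReal.ofReal (l * (β * s)) := ENNReal.one_le_ofReal.2 hs
    _ = ENNReal.ofReal β * ENNReal.ofReal (l * s) := by
        rw [← ENNReal.ofReal_mul hβ.le, mul_left_comm]
    _ < ENNReal.ofReal β * r :=
        (ENNReal.mul_lt_mul_iff_right (by simpa using hβ) ENNReal.ofReal_ne_top).2 hr

lemma div_mul_lt_one_of_lt {l s : ℝ} {r : ℝ≥0∞} (hβ : 0 < β) (hs : 0 < s) (hl : 1 ≤ l)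
    (hsκ : β * s = N / 2 * κ) (hr : ENNReal.ofReal (l * s) < r) :
    N / 2 * r⁻¹.toReal / β * κ < 1 := by
  have hsr : r⁻¹.toReal * s < 1 := toReal_inv_mul_lt_one hs
    ((ENNReal.ofReal_le_ofReal (le_mul_of_one_le_left hs.le hl)).trans_lt hr)
  have hident : N / 2 * r⁻¹.toReal / β * κ = r⁻¹.toReal * s := by
    field_simp
    linear_combination -2 * r⁻¹.toReal * hsκ
  exact hident.trans_lt hsr

lemma div_two_mul_one_div_sub {s : ℝ} (hs : s ≠ 0) (hκ : κ ≠ 0) (hsκ : β * s = N / 2 * κ) (x : ℝ) :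
    N / 2 * (1 / s - x) = β * (1 / κ) - N / 2 * x := by
  field_simp
  linear_combination -2 * hsκ

lemma BarrierExponents.one_le_mul (he : BarrierExponents p q α β κ) {l s₁ s₂ c : ℝ} (hl : 0 ≤ l)
    (hs₁ : β * s₁ = c) (hs₂ : α * s₂ = c) (hmin : 1 ≤ l * min s₁ s₂) : 1 ≤ l * c := by
  refine hmin.trans (mul_le_mul_of_nonneg_left ?_ hl)
  rcases max_choice α β with h | h <;> rw [he.max_eq_one] at h
  · exact (min_le_right s₁ s₂).trans_eq (by rw [← hs₂, ← h, one_mul])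
  · exact (min_le_left s₁ s₂).trans_eq (by rw [← hs₁, ← h, one_mul])

theorem statement16_general {N : ℕ} {p q : ℝ} (hp : 0 ≤ p) (hq : 0 ≤ q) (hpq : 1 < p * q)
    {r₁s r₂s : ℝ} (hr₁def : r₁s = (N : ℝ) / 2 * ((p * q - 1) / (p + 1)))
    (hr₂def : r₂s = (N : ℝ) / 2 * ((p * q - 1) / (q + 1)))
    {lstar : ℝ} (hl : 1 ≤ lstar) (hlmin : 1 ≤ lstar * min r₁s r₂s) {r₁ r₂ : ℝ≥0∞}
    (hr₁ : ENNReal.ofReal (lstar * r₁s) < r₁) (hr₂ : ENNReal.ofReal (lstar * r₂s) < r₂) :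
    ∃ c₁ : ℝ, 0 < c₁ ∧ ∀ (T : ℝ) (u₀ v₀ : Euc N → ℝ) (u v : Euc N → ℝ → ℝ),
      Measurable u₀ → Measurable v₀ → IsSolSys N p q u₀ v₀ (ENNReal.ofReal T) u v →
      limsup (fun t : ℝ => essSup (fun x => ENNReal.ofReal (u x t)) (volume : Measure (Euc N)) +
        essSup (fun x => ENNReal.ofReal (v x t)) (volume : Measure (Euc N)))
        (nhdsWithin T (Set.Iio T)) = ⊤ →
      ∀ t ∈ Set.Ioo 0 T, ENNReal.ofReal c₁ ≤
        ENNReal.ofReal ((T - t) ^ ((N : ℝ) / 2 * (1 / r₁s - r₁⁻¹.toReal))) *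
            ulocNorm N r₁ (Real.sqrt (T - t)) (fun x => u x t) +
          ENNReal.ofReal ((T - t) ^ ((N : ℝ) / 2 * (1 / r₂s - r₂⁻¹.toReal))) *
            ulocNorm N r₂ (Real.sqrt (T - t)) (fun x => v x t) := by
  obtain ⟨α, β, κ, he⟩ := exists_barrierExponents hp hq hpq
  have hs₁ : β * r₁s = N / 2 * κ := by rw [hr₁def, mul_left_comm, he.beta_mul_div]
  have hs₂ : α * r₂s = N / 2 * κ := by
    rw [hr₂def, mul_comm p q, mul_left_comm, he.symm.beta_mul_div]
  have hcrit : 1 ≤ lstar * (N / 2 * κ) := he.one_le_mul (by positivity) hs₁ hs₂ hlmin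
  have hc : 0 < N / 2 * κ := pos_of_mul_pos_right (one_pos.trans_le hcrit) (by positivity)
  have hr₁s : 0 < r₁s := pos_of_mul_pos_right (hs₁ ▸ hc) he.beta_pos.le
  have hr₂s : 0 < r₂s := pos_of_mul_pos_right (hs₂ ▸ hc) he.alpha_pos.le
  obtain ⟨ε, hε, hbarrier⟩ := exists_isBarrier (N := N) he
    (one_lt_ofReal_mul_of_lt he.beta_pos (hs₁ ▸ hcrit) hr₁)
    (one_lt_ofReal_mul_of_lt he.alpha_pos (hs₂ ▸ hcrit) hr₂)
    (div_mul_lt_one_of_lt he.beta_pos hr₁s hl hs₁ hr₁)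
    (div_mul_lt_one_of_lt he.alpha_pos hr₂s hl hs₂ hr₂)
  refine ⟨ε, hε, fun T u₀ v₀ u v hu₀ hv₀ hsol hblow t₀ ht₀ => ?_⟩
  rw [div_two_mul_one_div_sub hr₁s.ne' he.kappa_pos.ne' hs₁,
    div_two_mul_one_div_sub hr₂s.ne' he.kappa_pos.ne' hs₂]
  by_contra! hlt
  obtain ⟨w, z, hb, hz⟩ := hbarrier t₀ T (fun x => u x t₀) (fun x => v x t₀) ht₀.2
    (hsol.1.2.2.1.comp measurable_prodMk_right) (hsol.1.2.2.2.1.comp measurable_prodMk_right)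
    (hsol.1.1 · t₀) (hsol.1.2.1 · t₀)
    (le_ofReal_mul_rpow_neg (sub_pos.2 ht₀.2) (le_self_add.trans hlt.le))
    (le_ofReal_mul_rpow_neg (sub_pos.2 ht₀.2) (le_add_self.trans hlt.le))
  exact hsol.limsup_ne_top_of_isBarrier hu₀ hv₀ he ht₀ hb hz hblow

end BlowUpRate

/-- Theorem 3.3 (i): lower `liminf` estimate of the blow-up rate of the
minimal solution of the system (S) in uniformly local weak Lebesgue norms. -/
theorem statement16 (N : ℕ) (hN : 1 ≤ N) (p q : ℝ) (hp : 0 ≤ p) (hq : 0 ≤ q)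
    (hpq : 1 < p * q) (r₁s r₂s : ℝ)
    (hr₁def : r₁s = (N : ℝ) / 2 * ((p * q - 1) / (p + 1)))
    (hr₂def : r₂s = (N : ℝ) / 2 * ((p * q - 1) / (q + 1)))
    (lstar : ℝ) (hl : 1 ≤ lstar) (hlmin : 1 ≤ lstar * min r₁s r₂s)
    (T : ℝ) (hT : 0 < T) (u₀ v₀ : Euc N → ℝ)
    (hu₀m : Measurable u₀) (hv₀m : Measurable v₀)
    (hu₀ : ∀ x, 0 ≤ u₀ x) (hv₀ : ∀ x, 0 ≤ v₀ x)
    (u v : Euc N → ℝ → ℝ)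
    (hmin : IsMinSolSys N p q u₀ v₀ (ENNReal.ofReal T) u v)
    (hblow : Filter.limsup (fun t : ℝ =>
        essSup (fun x => ENNReal.ofReal (u x t)) (volume : Measure (Euc N)) +
          essSup (fun x => ENNReal.ofReal (v x t)) (volume : Measure (Euc N)))
        (nhdsWithin T (Set.Iio T)) = ⊤) :
    ∀ r₁ r₂ : ℝ≥0∞, ENNReal.ofReal (lstar * r₁s) < r₁ → ENNReal.ofReal (lstar * r₂s) < r₂ →
      ∃ c₁ : ℝ, 0 < c₁ ∧
        ENNReal.ofReal c₁ ≤ Filter.liminf (fun t : ℝ =>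
          ENNReal.ofReal ((T - t) ^ ((N : ℝ) / 2 * (1 / r₁s - r₁⁻¹.toReal))) *
              ulocNorm N r₁ (Real.sqrt (T - t)) (fun x => u x t) +
            ENNReal.ofReal ((T - t) ^ ((N : ℝ) / 2 * (1 / r₂s - r₂⁻¹.toReal))) *
              ulocNorm N r₂ (Real.sqrt (T - t)) (fun x => v x t))
          (nhdsWithin T (Set.Iio T)) := by
  intro r₁ r₂ hr₁ hr₂
  obtain ⟨c₁, hc₁, hle⟩ := statement16_general hp hq hpq hr₁def hr₂def hl hlmin hr₁ hr₂
  exact ⟨c₁, hc₁, le_liminf_of_le (by isBoundedDefault) <| by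
    filter_upwards [Ioo_mem_nhdsLT hT] using hle T u₀ v₀ u v hu₀m hv₀m hmin.1 hblow⟩
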